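/- arXiv:1411.5598 — 6 statements merged into one kernel-verified Lean document; each statement's English description precedes it below -/
import Mathlib

section
/- Let V be a complex vector space and let E₋₂, E₋₁, E₀, E₁, E₂ be endomorphisms of V satisfying [E_i, E_j] = (i−j)·E_{i+j} for all i, j ∈ {−2,−1,0,1,2} with i+j ∈ {−2,−1,0,1,2}. If not all five endomorphisms are zero, then either the family (E₋₂, E₋₁, E₀, E₁, E₂) is linearly independent over ℂ, or else E₋₁ = E₀ = E₁ = 0 and the pair (E₋₂, E₂) is linearly independent over ℂ. -/
/-- A representation of the partial Witt algebra Γ of size (−2,2) on a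
complex vector space is either injective (the five endomorphisms are linearly
independent) or kills exactly the copy of sl(2). -/
theorem partial_witt_rep_injective_or_sl2_trivial
    (V : Type*) [AddCommGroup V] [Module ℂ V]
    (E : ℤ → Module.End ℂ V)
    (hcomm : ∀ i j : ℤ, -2 ≤ i → i ≤ 2 → -2 ≤ j → j ≤ 2 → -2 ≤ i + j → i + j ≤ 2 →
      ⁅E i, E j⁆ = ((i - j : ℤ) : ℂ) • E (i + j))
    (hne : ¬ (E (-2) = 0 ∧ E (-1) = 0 ∧ E 0 = 0 ∧ E 1 = 0 ∧ E 2 = 0)) :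
    LinearIndependent ℂ ![E (-2), E (-1), E 0, E 1, E 2] ∨
      (E (-1) = 0 ∧ E 0 = 0 ∧ E 1 = 0 ∧ LinearIndependent ℂ ![E (-2), E 2]) := by
  have h0 : E 0 ≠ 0 := by
    intro h
    apply hne
    have key : ∀ j : ℤ, -2 ≤ j → j ≤ 2 → j ≠ 0 → E j = 0 := by
      intro j h1 h2 h3
      have := hcomm 0 j (by norm_num) (by norm_num) h1 h2 (by omega) (by omega)
      rw [h, Ring.lie_def, zero_mul, mul_zero, sub_zero, zero_add] at this
      rcases smul_eq_zero.mp this.symm with h4 | h4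
      · exfalso
        have h5 : (0 - j : ℤ) = 0 := by exact_mod_cast h4
        omega
      · exact h4
    exact ⟨key _ (by norm_num) (by norm_num) (by norm_num),
      key _ (by norm_num) (by norm_num) (by norm_num), h,
      key _ (by norm_num) (by norm_num) (by norm_num),
      key _ (by norm_num) (by norm_num) (by norm_num)⟩
  have hnz : ∀ j : ℤ, -2 ≤ j → j ≤ 2 → E j ≠ 0 := by
    intro j h1 h2 hj
    by_cases h3 : j = 0
    · subst h3
      exact h0 hj
    have := hcomm j (-j) h1 h2 (by omega) (by omega) (by omega) (by omega)
    rw [hj, Ring.lie_def, zero_mul, mul_zero, sub_zero, add_neg_cancel] at this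
    rcases smul_eq_zero.mp this.symm with h4 | h4
    · have h5 : (j - -j : ℤ) = 0 := by exact_mod_cast h4
      omega
    · exact h0 h4
  left
  have hev : ∀ j : ℤ, -2 ≤ j → j ≤ 2 →
      Module.End.HasEigenvector (LinearMap.mulLeft ℂ (E 0) - LinearMap.mulRight ℂ (E 0)) (-(j : ℂ)) (E j) := by
    intro j h1 h2
    refine ⟨?_, hnz j h1 h2⟩
    rw [Module.End.mem_eigenspace_iff, LinearMap.sub_apply, LinearMap.mulLeft_apply,
      LinearMap.mulRight_apply, ← Ring.lie_def,
      hcomm 0 j (by norm_num) (by norm_num) h1 h2 (by omega) (by omega)]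
    simp
  have hE : ![E (-2), E (-1), E 0, E 1, E 2] = fun k : Fin 5 => E ((k : ℤ) - 2) := by
    ext k : 1
    fin_cases k <;> simp
  rw [hE]
  refine Module.End.eigenvectors_linearIndependent'
    (LinearMap.mulLeft ℂ (E 0) - LinearMap.mulRight ℂ (E 0))
    (fun k : Fin 5 => -((((k : ℤ) - 2 : ℤ)) : ℂ)) ?_ _ ?_
  · intro a b hab
    have h1 : ((a : ℤ) - 2 : ℤ) = (b : ℤ) - 2 := by
      have := neg_injective hab
      exact_mod_cast this
    ext
    omega
  · intro k
    exact hev ((k : ℤ) - 2) (by omega) (by omega)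
end

section
/- Let (E,F,H) be a representation of sl(2,ℂ) on a complex vector space V and let T ∈ End(V) satisfy [F,T] = 3E and [H,T] = 4T. The following are equivalent: (1) there exists a Witt_>-module structure (ρ_i)_{i≥−1} on V compatible with (E,F,H) such that ρ₂ = T; (2) for all integers i, j ≥ 0, [(1/i!)·ad(E)^i(T), (1/j!)·ad(E)^j(T)] = (i−j)·(1/(i+j+2)!)·ad(E)^{i+j+2}(T); (3) there exists N ∈ ℕ such that for all k ≥ N, [T, (1/(2k−1)!)·ad(E)^{2k−1}(T)] = −((2k−1)/(2k+1)!)·ad(E)^{2k+1}(T). Moreover, in case (1) the structure is unique and is given by ρ_{2+i} = (1/i!)·ad(E)^i(T) for all i ≥ 0. -/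
/-- A Witt_>-module structure on `V` compatible with the sl(2)-representation `(E,F,H)`:
a family `ρ : ℤ → End(V)` with `ρ₋₁ = F`, `ρ₀ = −(1/2)H`, `ρ₁ = −E` and
`[ρ_i, ρ_j] = (i−j)·ρ_{i+j}` for all `i, j ≥ −1`. -/
def IsWittGtModule {V : Type*} [AddCommGroup V] [Module ℂ V]
    (E F H : Module.End ℂ V) (ρ : ℤ → Module.End ℂ V) : Prop :=
  ρ (-1) = F ∧ ρ 0 = (-(1/2) : ℂ) • H ∧ ρ 1 = -E ∧
    ∀ i j : ℤ, -1 ≤ i → -1 ≤ j → ⁅ρ i, ρ j⁆ = ((i - j : ℤ) : ℂ) • ρ (i + j)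

/-- `adPow A n T = ad(A)^n (T)`. -/
def adPow {V : Type*} [AddCommGroup V] [Module ℂ V]
    (A : Module.End ℂ V) (n : ℕ) (T : Module.End ℂ V) : Module.End ℂ V :=
  (fun X => ⁅A, X⁆)^[n] T

set_option linter.unusedSectionVars false

section WittHelpers

variable {L : Type*} [Ring L] [Algebra ℂ L]

theorem wl_smul_r (c : ℂ) (x y : L) : ⁅x, c • y⁆ = c • ⁅x, y⁆ := by
  simp only [Ring.lie_def, mul_smul_comm, smul_mul_assoc, smul_sub]

theorem wl_smul_l (c : ℂ) (x y : L) : ⁅c • x, y⁆ = c • ⁅x, y⁆ := by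
  simp only [Ring.lie_def, mul_smul_comm, smul_mul_assoc, smul_sub]

theorem wl_neg_r (x y : L) : ⁅x, -y⁆ = -⁅x, y⁆ := by
  simp only [Ring.lie_def]; noncomm_ring

theorem wl_neg_l (x y : L) : ⁅-x, y⁆ = -⁅x, y⁆ := by
  simp only [Ring.lie_def]; noncomm_ring

theorem wl_skew (x y : L) : -⁅y, x⁆ = ⁅x, y⁆ := by
  simp only [Ring.lie_def]; noncomm_ring

theorem wl_self (x : L) : ⁅x, x⁆ = 0 := by
  simp only [Ring.lie_def]; noncomm_ring

theorem wl_leibniz (x y z : L) : ⁅x, ⁅y, z⁆⁆ = ⁅⁅x, y⁆, z⁆ + ⁅y, ⁅x, z⁆⁆ := by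
  simp only [Ring.lie_def]; noncomm_ring

theorem wittAux_cast_ne (i : ℕ) : ((i : ℂ) + 1) ≠ 0 := by exact_mod_cast Nat.succ_ne_zero i

theorem wittAux_H (E H : L) (e : ℕ → L)
    (hHE : ⁅H, E⁆ = (2 : ℂ) • E) (hHT : ⁅H, e 0⁆ = (4 : ℂ) • e 0)
    (hE : ∀ i : ℕ, ⁅E, e i⁆ = ((i : ℂ) + 1) • e (i + 1)) (i : ℕ) :
    ⁅H, e i⁆ = (4 + 2 * (i : ℂ)) • e i := by
  induction i with
  | zero => simpa using hHT
  | succ i ih =>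
    apply smul_right_injective L (wittAux_cast_ne i)
    change ((i : ℂ) + 1) • ⁅H, e (i + 1)⁆ = ((i : ℂ) + 1) • _
    rw [← wl_smul_r, ← hE, wl_leibniz, hHE, ih, wl_smul_l, wl_smul_r, hE]
    push_cast
    module

theorem wittAux_F (E F H : L) (e : ℕ → L)
    (hEF : ⁅E, F⁆ = H) (hFT : ⁅F, e 0⁆ = (3 : ℂ) • E)
    (hH : ∀ i : ℕ, ⁅H, e i⁆ = (4 + 2 * (i : ℂ)) • e i)
    (hE : ∀ i : ℕ, ⁅E, e i⁆ = ((i : ℂ) + 1) • e (i + 1)) (i : ℕ) :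
    ⁅F, e (i + 1)⁆ = (-(4 + (i : ℂ))) • e i := by
  have hFE : ⁅F, E⁆ = -H := by rw [← hEF, wl_skew]
  induction i with
  | zero =>
    have h := hE 0
    simp only [Nat.cast_zero, zero_add, one_smul] at h
    rw [zero_add, ← h, wl_leibniz, hFE, hFT, wl_neg_l, hH, wl_smul_r, wl_self]
    push_cast
    module
  | succ i ih =>
    apply smul_right_injective L (wittAux_cast_ne (i + 1))
    change (((i + 1 : ℕ) : ℂ) + 1) • ⁅F, e (i + 1 + 1)⁆ = (((i + 1 : ℕ) : ℂ) + 1) • _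
    rw [← wl_smul_r, ← hE, wl_leibniz, hFE, ih, wl_neg_l, hH, wl_smul_r, hE]
    push_cast
    module

/-- If the relation holds for `i = 0`, it holds for all `i`. -/
theorem wittAux_all (E : L) (e : ℕ → L)
    (hE : ∀ i : ℕ, ⁅E, e i⁆ = ((i : ℂ) + 1) • e (i + 1))
    (h0 : ∀ j : ℕ, ⁅e 0, e j⁆ = (-(j : ℂ)) • e (j + 2)) (i : ℕ) :
    ∀ j : ℕ, ⁅e i, e j⁆ = ((i : ℂ) - j) • e (i + j + 2) := by
  induction i with
  | zero => intro j; rw [h0]; simp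
  | succ i ih =>
    intro j
    apply smul_right_injective L (wittAux_cast_ne i)
    change ((i : ℂ) + 1) • ⁅e (i + 1), e j⁆ = ((i : ℂ) + 1) • _
    have h1 : ⁅E, ⁅e i, e j⁆⁆ = _ := wl_leibniz E (e i) (e j)
    rw [ih, hE, hE, wl_smul_r, wl_smul_r, wl_smul_l, hE, ih] at h1
    rw [show i + (j + 1) + 2 = i + j + 2 + 1 by ring] at h1
    rw [show i + 1 + j + 2 = i + j + 2 + 1 by ring]
    push_cast at h1 ⊢
    rw [← sub_eq_zero] at h1 ⊢
    rw [← neg_eq_zero, ← h1]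
    module

/-- Applying `ad F` lowers the index in the relation for `i = 0`. -/
theorem wittAux_down (E F : L) (e : ℕ → L)
    (hE : ∀ i : ℕ, ⁅E, e i⁆ = ((i : ℂ) + 1) • e (i + 1))
    (hFT : ⁅F, e 0⁆ = (3 : ℂ) • E)
    (hF : ∀ i : ℕ, ⁅F, e (i + 1)⁆ = (-(4 + (i : ℂ))) • e i) (j : ℕ)
    (h : ⁅e 0, e (j + 1)⁆ = (-((j + 1 : ℕ) : ℂ)) • e (j + 1 + 2)) :
    ⁅e 0, e j⁆ = (-(j : ℂ)) • e (j + 2) := by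
  have hne : (4 + (j : ℂ)) ≠ 0 := by exact_mod_cast (by omega : 4 + j ≠ 0)
  apply smul_right_injective L hne
  change (4 + (j : ℂ)) • ⁅e 0, e j⁆ = (4 + (j : ℂ)) • _
  have h1 : ⁅F, ⁅e 0, e (j + 1)⁆⁆ = _ := wl_leibniz F (e 0) (e (j + 1))
  rw [h, hFT, hF, wl_smul_r, wl_smul_r, wl_smul_l, hE,
    show j + 1 + 2 = j + 2 + 1 by ring, hF] at h1
  push_cast at h1 ⊢
  rw [← sub_eq_zero] at h1 ⊢
  rw [← h1]
  module

end WittHelpers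

/-- characterization of the endomorphisms `T` giving rise to a
Witt_>-module structure extending a given sl(2)-representation, together with
uniqueness and the explicit formula `ρ_{2+i} = (1/i!)·ad(E)^i(T)`. -/
theorem wittGt_extension_iff
    (V : Type*) [AddCommGroup V] [Module ℂ V]
    (E F H T : Module.End ℂ V)
    (hEF : ⁅E, F⁆ = H) (hHE : ⁅H, E⁆ = (2 : ℂ) • E) (hHF : ⁅H, F⁆ = (-2 : ℂ) • F)
    (hFT : ⁅F, T⁆ = (3 : ℂ) • E) (hHT : ⁅H, T⁆ = (4 : ℂ) • T) :
    ((∃ ρ : ℤ → Module.End ℂ V, IsWittGtModule E F H ρ ∧ ρ 2 = T) ↔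
      (∀ i j : ℕ,
        ⁅((Nat.factorial i : ℂ))⁻¹ • adPow E i T, ((Nat.factorial j : ℂ))⁻¹ • adPow E j T⁆ =
          ((i : ℂ) - (j : ℂ)) • (((Nat.factorial (i + j + 2) : ℂ))⁻¹ • adPow E (i + j + 2) T))) ∧
    ((∀ i j : ℕ,
        ⁅((Nat.factorial i : ℂ))⁻¹ • adPow E i T, ((Nat.factorial j : ℂ))⁻¹ • adPow E j T⁆ =
          ((i : ℂ) - (j : ℂ)) • (((Nat.factorial (i + j + 2) : ℂ))⁻¹ • adPow E (i + j + 2) T)) ↔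
      (∃ N : ℕ, ∀ k : ℕ, N ≤ k →
        ⁅T, ((Nat.factorial (2 * k - 1) : ℂ))⁻¹ • adPow E (2 * k - 1) T⁆ =
          (-(((2 * k - 1 : ℕ) : ℂ) / (Nat.factorial (2 * k + 1) : ℂ))) •
            adPow E (2 * k + 1) T)) ∧
    (∀ ρ : ℤ → Module.End ℂ V, IsWittGtModule E F H ρ → ρ 2 = T →
      ∀ i : ℕ, ρ (2 + (i : ℤ)) = ((Nat.factorial i : ℂ))⁻¹ • adPow E i T) := by
  set e : ℕ → Module.End ℂ V := fun i => ((Nat.factorial i : ℂ))⁻¹ • adPow E i T with he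
  have hfac : ∀ i : ℕ, (Nat.factorial i : ℂ) ≠ 0 := fun i => by
    exact_mod_cast Nat.factorial_ne_zero i
  have he0 : e 0 = T := by simp [he, adPow]
  have hE : ∀ i : ℕ, ⁅E, e i⁆ = ((i : ℂ) + 1) • e (i + 1) := by
    intro i
    have h1 : adPow E (i + 1) T = ⁅E, adPow E i T⁆ := by
      simp only [adPow, Function.iterate_succ_apply']
    simp only [he, h1, wl_smul_r, smul_smul, Nat.factorial_succ]
    congr 1
    have := wittAux_cast_ne i
    have := hfac i
    push_cast
    field_simp
  have hFT' : ⁅F, e 0⁆ = (3 : ℂ) • E := by rw [he0, hFT]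
  have hH := wittAux_H E H e hHE (by rw [he0, hHT]) hE
  have hF := wittAux_F E F H e hEF hFT' hH hE
  have huniq : ∀ ρ : ℤ → Module.End ℂ V, IsWittGtModule E F H ρ → ρ 2 = T →
      ∀ i : ℕ, ρ (2 + (i : ℤ)) = e i := by
    rintro ρ ⟨-, -, h1, hρ⟩ h2 i
    induction i with
    | zero => simp [h2, he0]
    | succ i ih =>
      apply smul_right_injective _ (wittAux_cast_ne i)
      change ((i : ℂ) + 1) • ρ _ = ((i : ℂ) + 1) • e (i + 1)
      have h := hρ 1 (2 + i) (by omega) (by omega)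
      rw [h1, ih, wl_neg_l, hE, show (1 : ℤ) + (2 + i) = 2 + ((i + 1 : ℕ) : ℤ) by
        push_cast; ring] at h
      push_cast at h ⊢
      rw [← sub_eq_zero] at h ⊢
      rw [← h]
      module
  refine ⟨⟨?_, ?_⟩, ⟨?_, ?_⟩, huniq⟩
  · rintro ⟨ρ, hρ, h2⟩ i j
    have hu := huniq ρ hρ h2
    change ⁅e i, e j⁆ = ((i : ℂ) - j) • e (i + j + 2)
    rw [← hu, ← hu, ← hu, hρ.2.2.2 _ _ (by omega) (by omega)]
    push_cast
    congr 1
    · ring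
    · congr 1; ring
  · intro h
    change ∀ i j : ℕ, ⁅e i, e j⁆ = ((i : ℂ) - j) • e (i + j + 2) at h
    let ρ : ℤ → Module.End ℂ V := fun n =>
      if n = -1 then F else if n = 0 then (-(1/2) : ℂ) • H else if n = 1 then -E
      else e (n - 2).toNat
    have r1 : ρ (-1) = F := by simp [ρ]
    have r2 : ρ 0 = (-(1/2) : ℂ) • H := by simp [ρ]
    have r3 : ρ 1 = -E := by simp [ρ]
    have r4 : ∀ n : ℤ, ∀ i : ℕ, n = 2 + i → ρ n = e i := by
      rintro n i rfl
      simp only [ρ]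
      rw [if_neg (by omega), if_neg (by omega), if_neg (by omega)]
      congr 1
      omega
    have hcase : ∀ i : ℤ, -1 ≤ i → i = -1 ∨ i = 0 ∨ i = 1 ∨ ∃ n : ℕ, i = 2 + n := by
      intro i hi
      by_cases h2 : 2 ≤ i
      · exact Or.inr (Or.inr (Or.inr ⟨(i - 2).toNat, by omega⟩))
      · omega
    have hskew : ∀ i j : ℤ, ⁅ρ i, ρ j⁆ = ((i - j : ℤ) : ℂ) • ρ (i + j) →
        ⁅ρ j, ρ i⁆ = ((j - i : ℤ) : ℂ) • ρ (j + i) := by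
      intro i j hij
      rw [← wl_skew, hij, add_comm j i]
      push_cast
      module
    have hself : ∀ i : ℤ, ⁅ρ i, ρ i⁆ = ((i - i : ℤ) : ℂ) • ρ (i + i) := by
      intro i; simp [wl_self]
    have hm0 : ⁅ρ (-1), ρ 0⁆ = ((-1 - 0 : ℤ) : ℂ) • ρ (-1 + 0) := by
      rw [show (-1 : ℤ) + 0 = -1 by norm_num, r1, r2, wl_smul_r, ← wl_skew, hHF]
      push_cast
      module
    have hm1 : ⁅ρ (-1), ρ 1⁆ = ((-1 - 1 : ℤ) : ℂ) • ρ (-1 + 1) := by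
      rw [show (-1 : ℤ) + 1 = 0 by norm_num, r1, r2, r3, wl_neg_r, wl_skew, hEF]
      push_cast
      module
    have h01 : ⁅ρ 0, ρ 1⁆ = ((0 - 1 : ℤ) : ℂ) • ρ (0 + 1) := by
      rw [show (0 : ℤ) + 1 = 1 by norm_num, r2, r3, wl_neg_r, wl_smul_l, hHE]
      push_cast
      module
    have hmn : ∀ n : ℕ, ⁅ρ (-1), ρ (2 + n)⁆ = ((-1 - (2 + n) : ℤ) : ℂ) • ρ (-1 + (2 + n)) := by
      intro n
      cases n with
      | zero =>
        rw [show (-1 : ℤ) + (2 + (0 : ℕ)) = 1 by norm_num, r1, r3, r4 _ 0 rfl, hFT']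
        push_cast
        module
      | succ n =>
        rw [r4 (-1 + _) n (by push_cast; ring), r1, r4 _ (n + 1) rfl, hF]
        push_cast
        module
    have h0n : ∀ n : ℕ, ⁅ρ 0, ρ (2 + n)⁆ = ((0 - (2 + n) : ℤ) : ℂ) • ρ (0 + (2 + n)) := by
      intro n
      rw [zero_add, r2, r4 _ n rfl, wl_smul_l, hH]
      push_cast
      module
    have h1n : ∀ n : ℕ, ⁅ρ 1, ρ (2 + n)⁆ = ((1 - (2 + n) : ℤ) : ℂ) • ρ (1 + (2 + n)) := by
      intro n
      rw [r4 (1 + _) (n + 1) (by push_cast; ring), r3, r4 _ n rfl, wl_neg_l, hE]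
      push_cast
      module
    refine ⟨ρ, ⟨r1, r2, r3, ?_⟩, by rw [r4 2 0 rfl, he0]⟩
    intro i j hi hj
    rcases hcase i hi with rfl | rfl | rfl | ⟨n, rfl⟩ <;>
      rcases hcase j hj with rfl | rfl | rfl | ⟨m, rfl⟩
    · exact hself _
    · exact hm0
    · exact hm1
    · exact hmn m
    · exact hskew _ _ hm0
    · exact hself _
    · exact h01
    · exact h0n m
    · exact hskew _ _ hm1
    · exact hskew _ _ h01
    · exact hself _
    · exact h1n m
    · exact hskew _ _ (hmn n)
    · exact hskew _ _ (h0n n)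
    · exact hskew _ _ (h1n n)
    · rw [r4 _ n rfl, r4 _ m rfl, r4 (2 + n + (2 + m)) (n + m + 2) (by push_cast; ring), h]
      push_cast
      module
  · intro h
    refine ⟨1, fun k hk => ?_⟩
    have h1 := h 0 (2 * k - 1)
    change ⁅e 0, _⁆ = _ at h1
    rw [he0, show 0 + (2 * k - 1) + 2 = 2 * k + 1 by omega, smul_smul] at h1
    rw [h1]
    congr 1
    simp [div_eq_mul_inv]
  · rintro ⟨N, hN⟩
    have hodd : ∀ k : ℕ, N ≤ k → 1 ≤ k →
        ⁅e 0, e (2 * k - 1)⁆ = (-((2 * k - 1 : ℕ) : ℂ)) • e (2 * k - 1 + 2) := by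
      intro k hk hk1
      rw [he0, show 2 * k - 1 + 2 = 2 * k + 1 by omega]
      refine (hN k hk).trans ?_
      simp only [he, smul_smul]
      congr 1
      ring
    have hdown : ∀ d j : ℕ, ⁅e 0, e (j + d)⁆ = (-((j + d : ℕ) : ℂ)) • e (j + d + 2) →
        ⁅e 0, e j⁆ = (-(j : ℂ)) • e (j + 2) := by
      intro d
      induction d with
      | zero => intro j hj; exact hj
      | succ d ih =>
        intro j hj
        exact ih j (wittAux_down E F e hE hFT' hF (j + d) hj)
    refine wittAux_all E e hE (fun j => ?_)
    have h1 := hodd (N + j + 1) (by omega) (by omega)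
    refine hdown (2 * N + j + 1) j ?_
    rw [show 2 * (N + j + 1) - 1 = j + (2 * N + j + 1) by omega] at h1
    exact h1
end

section
/- Let (E,F,H) be a representation of sl(2,ℂ) on a complex vector space V and let S ∈ End(V) satisfy [E,S] = −3F and [H,S] = −4S. The following are equivalent: (1) there exists a Witt_<-module structure (ρ_i)_{i≤1} on V compatible with (E,F,H) such that ρ₋₂ = S; (2) for all integers i, j ≥ 0, [(1/i!)·ad(F)^i(S), (1/j!)·ad(F)^j(S)] = (j−i)·(1/(i+j+2)!)·ad(F)^{i+j+2}(S); (3) there exists N ∈ ℕ such that for all k ≥ N, [(1/(2k−1)!)·ad(F)^{2k−1}(S), S] = −((2k−1)/(2k+1)!)·ad(F)^{2k+1}(S). Moreover, in case (1) the structure is'unique and is given by ρ_{−(2+i)} = (1/i!)·ad(F)^i(S) for all i ≥ 0. -/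
/-- A Witt_<-module structure on `V` compatible with the sl(2)-representation `(E,F,H)`:
a family `ρ : ℤ → End(V)` with `ρ₋₁ = F`, `ρ₀ = −(1/2)H`, `ρ₁ = −E` and
`[ρ_i, ρ_j] = (i−j)·ρ_{i+j}` for all `i, j ≤ 1`. -/
def IsWittLtModule {V : Type*} [AddCommGroup V] [Module ℂ V]
    (E F H : Module.End ℂ V) (ρ : ℤ → Module.End ℂ V) : Prop :=
  ρ (-1) = F ∧ ρ 0 = (-(1/2) : ℂ) • H ∧ ρ 1 = -E ∧
    ∀ i j : ℤ, i ≤ 1 → j ≤ 1 → ⁅ρ i, ρ j⁆ = ((i - j : ℤ) : ℂ) • ρ (i + j)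

section WittHelpers

variable {V : Type*} [AddCommGroup V] [Module ℂ V]

theorem wLie_smul (c : ℂ) (A B : Module.End ℂ V) : ⁅A, c • B⁆ = c • ⁅A, B⁆ := by
  simp only [Ring.lie_def, mul_smul_comm, smul_mul_assoc, smul_sub]

theorem wSmul_lie (c : ℂ) (A B : Module.End ℂ V) : ⁅c • A, B⁆ = c • ⁅A, B⁆ := by
  simp only [Ring.lie_def, mul_smul_comm, smul_mul_assoc, smul_sub]

theorem wNeg_lie (A B : Module.End ℂ V) : ⁅-A, B⁆ = -⁅A, B⁆ := by
  simp only [Ring.lie_def]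
  noncomm_ring

theorem wLie_self (A : Module.End ℂ V) : ⁅A, A⁆ = 0 := by
  simp only [Ring.lie_def, sub_self]

theorem wLie_skew (A B : Module.End ℂ V) : -⁅B, A⁆ = ⁅A, B⁆ := by
  simp only [Ring.lie_def, neg_sub]

theorem wLeibniz (A B C : Module.End ℂ V) : ⁅A, ⁅B, C⁆⁆ = ⁅⁅A, B⁆, C⁆ + ⁅B, ⁅A, C⁆⁆ := by
  simp only [Ring.lie_def]
  noncomm_ring

/-- Divided ad-powers. -/
noncomputable def sSeq (F S : Module.End ℂ V) (n : ℕ) : Module.End ℂ V :=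
  ((Nat.factorial n : ℂ))⁻¹ • adPow F n S

theorem sSeq_zero (F S : Module.End ℂ V) : sSeq F S 0 = S := by
  simp [sSeq, adPow]

theorem sSeq_F (F S : Module.End ℂ V) (n : ℕ) :
    ⁅F, sSeq F S n⁆ = ((n : ℂ) + 1) • sSeq F S (n + 1) := by
  have h1 : adPow F (n + 1) S = ⁅F, adPow F n S⁆ := by
    simp only [adPow, Function.iterate_succ_apply']
  have h2 : ((n : ℂ) + 1) ≠ 0 := by exact_mod_cast Nat.succ_ne_zero n
  have h3 : (Nat.factorial n : ℂ) ≠ 0 := by exact_mod_cast Nat.factorial_ne_zero n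
  rw [sSeq, sSeq, h1, wLie_smul, smul_smul, Nat.factorial_succ]
  congr 1
  push_cast
  field_simp

theorem smul_cancel_aux {c : ℂ} (hc : c ≠ 0) {x y : Module.End ℂ V} (h : c • x = c • y) :
    x = y := by
  have := congrArg (fun z => c⁻¹ • z) h
  simpa [smul_smul, hc] using this

theorem sSeq_H {F H S : Module.End ℂ V} (hHF : ⁅H, F⁆ = (-2 : ℂ) • F)
    (hHS : ⁅H, S⁆ = (-4 : ℂ) • S) (n : ℕ) :
    ⁅H, sSeq F S n⁆ = (-4 - 2 * (n : ℂ)) • sSeq F S n := by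
  induction n with
  | zero => rw [sSeq_zero, hHS]; simp
  | succ n ih =>
    have h2 : ((n : ℂ) + 1) ≠ 0 := by exact_mod_cast Nat.succ_ne_zero n
    apply smul_cancel_aux h2
    rw [← wLie_smul, ← sSeq_F, wLeibniz, ih, hHF, wLie_smul, wSmul_lie, sSeq_F]
    push_cast
    module

theorem sSeq_E {E F H S : Module.End ℂ V} (hEF : ⁅E, F⁆ = H) (hHF : ⁅H, F⁆ = (-2 : ℂ) • F)
    (hES : ⁅E, S⁆ = (-3 : ℂ) • F) (hHS : ⁅H, S⁆ = (-4 : ℂ) • S) (n : ℕ) :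
    ⁅E, sSeq F S (n + 1)⁆ = (-4 - (n : ℂ)) • sSeq F S n := by
  induction n with
  | zero =>
    have h := sSeq_F F S 0
    rw [sSeq_zero] at h ⊢
    simp only [Nat.cast_zero, zero_add, one_smul] at h
    rw [zero_add, ← h, wLeibniz, hEF, hHS, hES, wLie_smul, wLie_self]
    simp
  | succ n ih =>
    have h2 : (((n + 1 : ℕ) : ℂ) + 1) ≠ 0 := by exact_mod_cast Nat.succ_ne_zero (n + 1)
    apply smul_cancel_aux h2
    rw [← wLie_smul, ← sSeq_F, wLeibniz, ih, hEF, sSeq_H hHF hHS, wLie_smul, sSeq_F]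
    push_cast
    module

theorem sSeq_down {E F H S : Module.End ℂ V} (hEF : ⁅E, F⁆ = H) (hHF : ⁅H, F⁆ = (-2 : ℂ) • F)
    (hES : ⁅E, S⁆ = (-3 : ℂ) • F) (hHS : ⁅H, S⁆ = (-4 : ℂ) • S) (n : ℕ)
    (h : ⁅sSeq F S (n + 1), S⁆ = (-((n : ℂ) + 1)) • sSeq F S (n + 3)) :
    ⁅sSeq F S n, S⁆ = (-(n : ℂ)) • sSeq F S (n + 2) := by
  have h1 := congrArg (fun z => ⁅E, z⁆) h
  beta_reduce at h1
  rw [wLeibniz, wLie_smul, sSeq_E hEF hHF hES hHS, hES,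
    show n + 3 = (n + 2) + 1 from rfl, sSeq_E hEF hHF hES hHS, wSmul_lie, wLie_smul,
    ← wLie_skew _ F, sSeq_F] at h1
  have h2 : ((n : ℂ) + 4) ≠ 0 := by exact_mod_cast Nat.succ_ne_zero (n + 3)
  apply smul_cancel_aux h2
  push_cast at h1
  have h3 : ((n : ℂ) + 4) • ⁅sSeq F S n, S⁆ = -((-4 - (n : ℂ)) • ⁅sSeq F S n, S⁆) := by module
  rw [h3, eq_sub_of_add_eq h1]
  module

theorem sSeq_all {F S : Module.End ℂ V}
    (h : ∀ n : ℕ, ⁅sSeq F S n, S⁆ = (-(n : ℂ)) • sSeq F S (n + 2)) (j : ℕ) :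
    ∀ i : ℕ, ⁅sSeq F S i, sSeq F S j⁆ = ((j : ℂ) - (i : ℂ)) • sSeq F S (i + j + 2) := by
  induction j with
  | zero => intro i; rw [sSeq_zero, h]; simp
  | succ j ih =>
    intro i
    have h1 := congrArg (fun z => ⁅F, z⁆) (ih i)
    beta_reduce at h1
    rw [wLeibniz, wLie_smul, sSeq_F, sSeq_F, sSeq_F, wSmul_lie, wLie_smul, ih (i + 1),
      show i + 1 + j + 2 = i + j + 2 + 1 by ring] at h1
    have h2 : ((j : ℂ) + 1) ≠ 0 := by exact_mod_cast Nat.succ_ne_zero j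
    apply smul_cancel_aux h2
    rw [show i + (j + 1) + 2 = i + j + 2 + 1 by ring, eq_sub_of_add_eq' h1]
    push_cast
    module

/-- The family indexed by `1 - i`. -/
noncomputable def wittSeq (E F H S : Module.End ℂ V) : ℕ → Module.End ℂ V
  | 0 => -E
  | 1 => (-(1/2) : ℂ) • H
  | 2 => F
  | n + 3 => sSeq F S n

theorem wittSeq_lie {E F H S : Module.End ℂ V} (hEF : ⁅E, F⁆ = H)
    (hHE : ⁅H, E⁆ = (2 : ℂ) • E) (hHF : ⁅H, F⁆ = (-2 : ℂ) • F)
    (hES : ⁅E, S⁆ = (-3 : ℂ) • F) (hHS : ⁅H, S⁆ = (-4 : ℂ) • S)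
    (h : ∀ i j : ℕ, ⁅sSeq F S i, sSeq F S j⁆ = ((j : ℂ) - (i : ℂ)) • sSeq F S (i + j + 2))
    (a b : ℕ) (hab : a < b) :
    ⁅wittSeq E F H S a, wittSeq E F H S b⁆ =
      ((b : ℂ) - (a : ℂ)) • wittSeq E F H S (a + b - 1) := by
  match a, b, hab with
  | 0, 1, _ =>
    simp only [wittSeq]
    rw [wNeg_lie, wLie_smul, ← wLie_skew _ H, hHE]
    push_cast
    module
  | 0, 2, _ =>
    simp only [wittSeq]
    rw [wNeg_lie, hEF]
    push_cast
    module
  | 0, 3, _ =>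
    simp only [wittSeq]
    rw [wNeg_lie, sSeq_zero, hES]
    push_cast
    module
  | 0, n + 4, _ =>
    have : 0 + (n + 4) - 1 = n + 3 := by omega
    rw [this]
    simp only [wittSeq]
    rw [wNeg_lie, sSeq_E hEF hHF hES hHS]
    push_cast
    module
  | 1, 2, _ =>
    simp only [wittSeq]
    rw [wSmul_lie, hHF]
    push_cast
    module
  | 1, n + 3, _ =>
    have : 1 + (n + 3) - 1 = n + 3 := by omega
    rw [this]
    simp only [wittSeq]
    rw [wSmul_lie, sSeq_H hHF hHS]
    push_cast
    module
  | 2, n + 3, _ =>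
    have : 2 + (n + 3) - 1 = n + 1 + 3 := by omega
    rw [this]
    simp only [wittSeq]
    rw [sSeq_F]
    push_cast
    module
  | m + 3, n + 3, _ =>
    have : m + 3 + (n + 3) - 1 = m + n + 2 + 3 := by omega
    rw [this]
    simp only [wittSeq]
    rw [h]
    push_cast
    module

theorem wittSeq_lie' {E F H S : Module.End ℂ V} (hEF : ⁅E, F⁆ = H)
    (hHE : ⁅H, E⁆ = (2 : ℂ) • E) (hHF : ⁅H, F⁆ = (-2 : ℂ) • F)
    (hES : ⁅E, S⁆ = (-3 : ℂ) • F) (hHS : ⁅H, S⁆ = (-4 : ℂ) • S)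
    (h : ∀ i j : ℕ, ⁅sSeq F S i, sSeq F S j⁆ = ((j : ℂ) - (i : ℂ)) • sSeq F S (i + j + 2))
    (a b : ℕ) :
    ⁅wittSeq E F H S a, wittSeq E F H S b⁆ =
      ((b : ℂ) - (a : ℂ)) • wittSeq E F H S (a + b - 1) := by
  rcases lt_trichotomy a b with hab | hab | hab
  · exact wittSeq_lie hEF hHE hHF hES hHS h a b hab
  · subst hab; rw [wLie_self]; simp
  · rw [← wLie_skew, wittSeq_lie hEF hHE hHF hES hHS h b a hab, add_comm b a]
    module

theorem witt_formula {E F H S : Module.End ℂ V} (ρ : ℤ → Module.End ℂ V)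
    (hρ : IsWittLtModule E F H ρ) (hS : ρ (-2) = S) (i : ℕ) :
    ρ (-(2 + (i : ℤ))) = sSeq F S i := by
  obtain ⟨h1, -, -, hb⟩ := hρ
  induction i with
  | zero => rw [sSeq_zero]; simpa using hS
  | succ i ih =>
    have h2 : ((i : ℂ) + 1) ≠ 0 := by exact_mod_cast Nat.succ_ne_zero i
    apply smul_cancel_aux h2
    have h3 := hb (-1) (-(2 + (i : ℤ))) (by omega) (by omega)
    rw [h1, ih, sSeq_F] at h3
    rw [h3, show (-1 + -(2 + (i : ℤ))) = -(2 + ((i + 1 : ℕ) : ℤ)) by push_cast; ring]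
    congr 1
    push_cast
    ring

end WittHelpers

/-- characterization of the endomorphisms `S` giving rise to a
Witt_<-module structure extending a given sl(2)-representation, together with
uniqueness and the explicit formula `ρ_{−(2+i)} = (1/i!)·ad(F)^i(S)`. -/
theorem wittLt_extension_iff
    (V : Type*) [AddCommGroup V] [Module ℂ V]
    (E F H S : Module.End ℂ V)
    (hEF : ⁅E, F⁆ = H) (hHE : ⁅H, E⁆ = (2 : ℂ) • E) (hHF : ⁅H, F⁆ = (-2 : ℂ) • F)
    (hES : ⁅E, S⁆ = (-3 : ℂ) • F) (hHS : ⁅H, S⁆ = (-4 : ℂ) • S) :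
    ((∃ ρ : ℤ → Module.End ℂ V, IsWittLtModule E F H ρ ∧ ρ (-2) = S) ↔
      (∀ i j : ℕ,
        ⁅((Nat.factorial i : ℂ))⁻¹ • adPow F i S, ((Nat.factorial j : ℂ))⁻¹ • adPow F j S⁆ =
          ((j : ℂ) - (i : ℂ)) • (((Nat.factorial (i + j + 2) : ℂ))⁻¹ • adPow F (i + j + 2) S))) ∧
    ((∀ i j : ℕ,
        ⁅((Nat.factorial i : ℂ))⁻¹ • adPow F i S, ((Nat.factorial j : ℂ))⁻¹ • adPow F j S⁆ =
          ((j : ℂ) - (i : ℂ)) • (((Nat.factorial (i + j + 2) : ℂ))⁻¹ • adPow F (i + j + 2) S)) ↔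
      (∃ N : ℕ, ∀ k : ℕ, N ≤ k →
        ⁅((Nat.factorial (2 * k - 1) : ℂ))⁻¹ • adPow F (2 * k - 1) S, S⁆ =
          (-(((2 * k - 1 : ℕ) : ℂ) / (Nat.factorial (2 * k + 1) : ℂ))) •
            adPow F (2 * k + 1) S)) ∧
    (∀ ρ : ℤ → Module.End ℂ V, IsWittLtModule E F H ρ → ρ (-2) = S →
      ∀ i : ℕ, ρ (-(2 + (i : ℤ))) = ((Nat.factorial i : ℂ))⁻¹ • adPow F i S) := by
  have key : ∀ i j : ℕ,
      (⁅((Nat.factorial i : ℂ))⁻¹ • adPow F i S, ((Nat.factorial j : ℂ))⁻¹ • adPow F j S⁆ =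
          ((j : ℂ) - (i : ℂ)) • (((Nat.factorial (i + j + 2) : ℂ))⁻¹ • adPow F (i + j + 2) S)) ↔
      ⁅sSeq F S i, sSeq F S j⁆ = ((j : ℂ) - (i : ℂ)) • sSeq F S (i + j + 2) :=
    fun i j => Iff.rfl
  simp only [key]
  refine ⟨⟨?_, ?_⟩, ⟨?_, ?_⟩, fun ρ hρ hS i => witt_formula ρ hρ hS i⟩
  · rintro ⟨ρ, hρ, hS⟩ i j
    have h := hρ.2.2.2 (-(2 + (i : ℤ))) (-(2 + (j : ℤ))) (by omega) (by omega)
    rw [show -(2 + (i : ℤ)) + -(2 + (j : ℤ)) = -(2 + ((i + j + 2 : ℕ) : ℤ)) by push_cast; ring,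
      witt_formula ρ hρ hS, witt_formula ρ hρ hS, witt_formula ρ hρ hS] at h
    rw [h]
    congr 1
    push_cast
    ring
  · intro h
    refine ⟨fun i => wittSeq E F H S (1 - i).toNat, ⟨rfl, rfl, rfl, ?_⟩, ?_⟩
    swap
    · have h3 : wittSeq E F H S 3 = S := by
        rw [wittSeq, sSeq_zero]
      exact h3
    intro i j hi hj
    obtain ⟨a, ha⟩ := Int.eq_ofNat_of_zero_le (sub_nonneg.mpr hi)
    obtain ⟨b, hb⟩ := Int.eq_ofNat_of_zero_le (sub_nonneg.mpr hj)
    have e1 : (1 - i).toNat = a := by omega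
    have e2 : (1 - j).toNat = b := by omega
    have e3 : (1 - (i + j)).toNat = a + b - 1 := by omega
    have e4 : i - j = (b : ℤ) - a := by omega
    simp only [e1, e2, e3, e4]
    rw [wittSeq_lie' hEF hHE hHF hES hHS h]
    push_cast
    rfl
  · intro h
    refine ⟨1, fun k hk => ?_⟩
    have h1 := h (2 * k - 1) 0
    rw [sSeq_zero, show 2 * k - 1 + 0 + 2 = 2 * k + 1 by omega] at h1
    change ⁅sSeq F S (2 * k - 1), S⁆ = _
    rw [h1, sSeq, smul_smul]
    congr 1
    push_cast
    ring
  · rintro ⟨N, hN⟩ i j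
    refine sSeq_all ?_ j i
    have down : ∀ d n : ℕ,
        ⁅sSeq F S (n + d), S⁆ = (-((n + d : ℕ) : ℂ)) • sSeq F S (n + d + 2) →
        ⁅sSeq F S n, S⁆ = (-(n : ℂ)) • sSeq F S (n + 2) := by
      intro d
      induction d with
      | zero => intro n h; exact h
      | succ d ih =>
        intro n h
        apply ih
        apply sSeq_down hEF hHF hES hHS
        rw [← add_assoc] at h
        rw [h, show n + d + 1 + 2 = n + d + 3 by ring]
        push_cast
        rfl
    intro n
    have h1 := hN (N + n + 1) (by omega)
    obtain ⟨d, hd⟩ : ∃ d, 2 * (N + n + 1) - 1 = n + d := ⟨2 * N + n + 1, by omega⟩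
    apply down d n
    rw [show 2 * (N + n + 1) + 1 = n + d + 2 by omega, hd] at h1
    change ⁅sSeq F S (n + d), S⁆ = _ at h1
    rw [h1, sSeq, smul_smul]
    congr 1
    ring
end

section
/- Let (E,F,H) be a representation of sl(2,ℂ) on a complex vector space V with not all of E, F, H equal to zero. Let (ρ^>_i)_{i≥−1} be a Witt_>-module structure on V compatible with (E,F,H) and let (ρ^<_i)_{i≤1} be a Witt_<-module structure on V compatible with (E,F,H); set T = ρ^>₂ and S = ρ^<₋₂. Then there exists a Witt-module structure (ρ_i)_{i∈ℤ} on V compatible with (E,F,H) with ρ_i = ρ^>_i for all i ≥ −1 and ρ_i = ρ^<_i for all i ≤ 1 if and only if [S,T] = 2H. -/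
/-- Witt-module structure compatible with `(E,F,H)`. -/
def IsWittModule {V : Type*} [AddCommGroup V] [Module ℂ V]
    (E F H : Module.End ℂ V) (ρ : ℤ → Module.End ℂ V) : Prop :=
  ρ (-1) = F ∧ ρ 0 = (-(1/2) : ℂ) • H ∧ ρ 1 = -E ∧
    ∀ i j : ℤ, ⁅ρ i, ρ j⁆ = ((i - j : ℤ) : ℂ) • ρ (i + j)

theorem witt_step {V : Type*} [AddCommGroup V] [Module ℂ V] (L : ℤ → Module.End ℂ V)
    (a m n : ℤ) (ha : ∀ k, ⁅L a, L k⁆ = ((a - k : ℤ) : ℂ) • L (a + k))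
    (h1 : ⁅L m, L n⁆ = ((m - n : ℤ) : ℂ) • L (m + n))
    (h2 : ⁅L (a + m), L n⁆ = ((a + m - n : ℤ) : ℂ) • L (a + m + n))
    (hne : a ≠ n) : ⁅L m, L (a + n)⁆ = ((m - (a + n) : ℤ) : ℂ) • L (m + (a + n)) := by
  have key : ⁅L a, ⁅L m, L n⁆⁆ = ⁅⁅L a, L m⁆, L n⁆ + ⁅L m, ⁅L a, L n⁆⁆ := by
    simp only [Ring.lie_def]
    noncomm_ring
  have ls : ∀ (c : ℂ) (x y : Module.End ℂ V), ⁅x, c • y⁆ = c • ⁅x, y⁆ := by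
    intro c x y
    simp only [Ring.lie_def, mul_smul_comm, smul_mul_assoc, smul_sub]
  have sl : ∀ (c : ℂ) (x y : Module.End ℂ V), ⁅c • x, y⁆ = c • ⁅x, y⁆ := by
    intro c x y
    simp only [Ring.lie_def, mul_smul_comm, smul_mul_assoc, smul_sub]
  rw [h1, ha m, ha n, ls, sl, ls, h2, ha (m + n)] at key
  have e1 : a + (m + n) = m + (a + n) := by ring
  have e2 : a + m + n = m + (a + n) := by ring
  rw [e1, e2] at key
  have hc : ((a - n : ℤ) : ℂ) ≠ 0 := by
    exact_mod_cast sub_ne_zero.mpr hne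
  apply smul_right_injective _ hc
  simp only
  rw [← sub_eq_iff_eq_add'] at key
  rw [← key, smul_smul, smul_smul, smul_smul, ← sub_smul]
  congr 1
  push_cast
  ring

theorem witt_symm {V : Type*} [AddCommGroup V] [Module ℂ V] (L : ℤ → Module.End ℂ V)
    (m n : ℤ) (h : ⁅L m, L n⁆ = ((m - n : ℤ) : ℂ) • L (m + n)) :
    ⁅L n, L m⁆ = ((n - m : ℤ) : ℂ) • L (n + m) := by
  have sk : ⁅L n, L m⁆ = -⁅L m, L n⁆ := by
    simp only [Ring.lie_def, neg_sub]
  rw [sk, h, ← neg_smul, add_comm n m]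
  congr 1
  push_cast
  ring

theorem witt_all {V : Type*} [AddCommGroup V] [Module ℂ V] (L : ℤ → Module.End ℂ V)
    (hg : ∀ i j : ℤ, -1 ≤ i → -1 ≤ j → ⁅L i, L j⁆ = ((i - j : ℤ) : ℂ) • L (i + j))
    (hl : ∀ i j : ℤ, i ≤ 1 → j ≤ 1 → ⁅L i, L j⁆ = ((i - j : ℤ) : ℂ) • L (i + j))
    (h0 : ⁅L (-2), L 2⁆ = ((-2 - 2 : ℤ) : ℂ) • L (-2 + 2)) (i j : ℤ) :
    ⁅L i, L j⁆ = ((i - j : ℤ) : ℂ) • L (i + j) := by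
  have hp : ∀ k, ⁅L 1, L k⁆ = ((1 - k : ℤ) : ℂ) • L (1 + k) := by
    intro k
    by_cases hk : -1 ≤ k
    · exact hg _ _ (by omega) hk
    · exact hl _ _ (by omega) (by omega)
  have hm : ∀ k, ⁅L (-1), L k⁆ = ((-1 - k : ℤ) : ℂ) • L (-1 + k) := by
    intro k
    by_cases hk : -1 ≤ k
    · exact hg _ _ (by omega) hk
    · exact hl _ _ (by omega) (by omega)
  have A : ∀ n : ℤ, 2 ≤ n → ⁅L (-2), L n⁆ = ((-2 - n : ℤ) : ℂ) • L (-2 + n) := by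
    intro n hn
    induction n, hn using Int.leInduction with
    | base => exact h0
    | succ n hn ih =>
      rw [add_comm n 1]
      exact witt_step L 1 (-2) n hp ih (hm n) (by omega)
  have B : ∀ k : ℕ, ∀ n : ℤ, 2 ≤ n →
      ⁅L (-2 - k), L n⁆ = ((-2 - k - n : ℤ) : ℂ) • L (-2 - k + n) := by
    intro k
    induction k with
    | zero => simpa using A
    | succ k ih =>
      intro n hn
      have e : (-2 - ((k + 1 : ℕ) : ℤ)) = -1 + (-2 - (k : ℤ)) := by push_cast; ring
      rw [e]
      apply witt_symm
      apply witt_step L (-1) n (-2 - k) hm (witt_symm L _ _ (ih n hn)) _ (by omega)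
      apply witt_symm
      by_cases h : n = 2
      · subst h
        exact hl _ _ (by omega) (by omega)
      · exact ih _ (by omega)
  have C : ∀ m n : ℤ, m ≤ -2 → 2 ≤ n → ⁅L m, L n⁆ = ((m - n : ℤ) : ℂ) • L (m + n) := by
    intro m n h1 h2
    obtain ⟨k, hk⟩ := Int.eq_ofNat_of_zero_le (show 0 ≤ -2 - m by omega)
    have e : m = -2 - (k : ℤ) := by omega
    rw [e]
    exact B k n h2
  by_cases a : -1 ≤ i ∧ -1 ≤ j
  · exact hg _ _ a.1 a.2
  by_cases b : i ≤ 1 ∧ j ≤ 1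
  · exact hl _ _ b.1 b.2
  by_cases c : i ≤ -2
  · exact C _ _ c (by omega)
  · exact witt_symm L _ _ (C _ _ (by omega) (by omega))

/-- a Witt_>-structure and a Witt_<-structure extending a non trivial
sl(2)-representation glue to a Witt-module structure if and only if `[S,T] = 2H`,
where `T = ρ^>₂` and `S = ρ^<₋₂`. -/
theorem witt_gluing_iff
    (V : Type*) [AddCommGroup V] [Module ℂ V]
    (E F H : Module.End ℂ V)
    (hEF : ⁅E, F⁆ = H) (hHE : ⁅H, E⁆ = (2 : ℂ) • E) (hHF : ⁅H, F⁆ = (-2 : ℂ) • F)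
    (hnt : ¬ (E = 0 ∧ F = 0 ∧ H = 0))
    (ρg ρl : ℤ → Module.End ℂ V)
    (hg : IsWittGtModule E F H ρg) (hl : IsWittLtModule E F H ρl) :
    (∃ ρ : ℤ → Module.End ℂ V, IsWittModule E F H ρ ∧
        (∀ i : ℤ, -1 ≤ i → ρ i = ρg i) ∧ (∀ i : ℤ, i ≤ 1 → ρ i = ρl i)) ↔
      ⁅ρl (-2), ρg 2⁆ = (2 : ℂ) • H := by
  obtain ⟨g1, g2, g3, g4⟩ := hg
  obtain ⟨l1, l2, l3, l4⟩ := hl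
  constructor
  · rintro ⟨ρ, ⟨-, r0, -, r⟩, hρg, hρl⟩
    rw [← hρg 2 (by norm_num), ← hρl (-2) (by norm_num), r]
    norm_num
    rw [r0, smul_smul]
    norm_num
  · intro h
    let L : ℤ → Module.End ℂ V := fun i => if -1 ≤ i then ρg i else ρl i
    have Lg : ∀ i : ℤ, -1 ≤ i → L i = ρg i := fun i hi => if_pos hi
    have Ll : ∀ i : ℤ, i ≤ 1 → L i = ρl i := by
      intro i hi
      by_cases hi' : -1 ≤ i
      · rw [Lg i hi']
        obtain rfl | rfl | rfl : i = -1 ∨ i = 0 ∨ i = 1 := by omega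
        · rw [g1, l1]
        · rw [g2, l2]
        · rw [g3, l3]
      · exact if_neg hi'
    refine ⟨L, ⟨?_, ?_, ?_, ?_⟩, Lg, Ll⟩
    · rw [Lg _ (by norm_num), g1]
    · rw [Lg _ (by norm_num), g2]
    · rw [Lg _ (by norm_num), g3]
    · apply witt_all
      · intro i j hi hj
        by_cases hij : -1 ≤ i + j
        · rw [Lg i hi, Lg j hj, Lg _ hij, g4 i j hi hj]
        · obtain ⟨rfl, rfl⟩ : i = -1 ∧ j = -1 := by omega
          simp [Ring.lie_def]
      · intro i j hi hj
        by_cases hij : i + j ≤ 1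
        · rw [Ll i hi, Ll j hj, Ll _ hij, l4 i j hi hj]
        · obtain ⟨rfl, rfl⟩ : i = 1 ∧ j = 1 := by omega
          simp [Ring.lie_def]
      · rw [Lg 2 (by norm_num), Ll (-2) (by norm_num), h, Lg _ (by norm_num)]
        norm_num
        rw [g2, smul_smul]
        norm_num
end

section
/- Fix μ₀, τ ∈ ℂ with τ ≠ (μ+1)² for all μ ∈ ξ = μ₀+2ℤ. Let V be a complex vector space with a representation (E,F,H) of sl(2,ℂ) such that V is the internal direct sum of its weight spaces V_μ = ker(H − μ·id) for μ ∈ ξ, each V_μ is finite dimensional, and (c − τ) is nilpotent on each V_μ, where c = (H + id)² + 4F∘E is the Casimir operator. Let K ∈ End(V) satisfy K∘K = c and [K,E] = [K,F] = [K,H] = 0 (a square root of the Casimir commuting with the sl(2)-action). Then there exists a Witt_>-module structure (ρ_i)_{i≥−1} on V compatible with (E,F,H) such that c commutes with ρ_i for every i ≥ −1, i.e., the Casimir operator is central for the extended action. -/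
section WittAlgebra

variable {R : Type*} [Ring R] [Algebra ℂ R]

/-- Moving `h` past a power of `x`. -/
theorem wgt_h_pow (h x : R) (hx : h * x = x * (h + 1)) (n : ℕ) :
    h * x ^ n = x ^ n * (h + (n : ℂ) • (1 : R)) := by
  induction n with
  | zero => simp
  | succ k ih =>
    rw [pow_succ, ← mul_assoc, ih, mul_assoc, mul_assoc, add_mul, hx]
    congr 1
    simp only [mul_add, mul_one, smul_mul_assoc, one_mul, mul_smul_comm]
    push_cast
    module

/-- The product of two positive modes. -/
theorem wgt_prod (h x l : R) (hx : h * x = x * (h + 1)) (hlx : l * x = x * l)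
    (a b : ℂ) (m n : ℕ) :
    (x ^ m * (h + a • l)) * (x ^ n * (h + b • l)) =
      x ^ (m + n) * ((h + (n : ℂ) • (1 : R) + a • l) * (h + b • l)) := by
  have h1 := wgt_h_pow h x hx n
  have h2 : l * x ^ n = x ^ n * l := (Commute.pow_right hlx n)
  have h3 : (h + a • l) * x ^ n = x ^ n * (h + (n : ℂ) • (1 : R) + a • l) := by
    rw [add_mul, h1, smul_mul_assoc, h2, mul_add (x ^ n) _ (a • l), mul_smul_comm]
  rw [mul_assoc, ← mul_assoc _ (x ^ n), h3, pow_add]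
  simp only [mul_assoc]

/-- Bracket of two nonnegative modes. -/
theorem wgt_bracket (h x l : R) (hx : h * x = x * (h + 1)) (hlx : l * x = x * l)
    (hlh : l * h = h * l) (m n : ℕ) :
    ⁅-(x ^ m * (h + (m : ℂ) • l)), -(x ^ n * (h + (n : ℂ) • l))⁆ =
      ((m : ℂ) - n) • (-(x ^ (m + n) * (h + ((m : ℂ) + n) • l))) := by
  rw [Ring.lie_def, neg_mul_neg, neg_mul_neg, wgt_prod h x l hx hlx, wgt_prod h x l hx hlx,
    add_comm n m, ← mul_sub, ← mul_neg, ← mul_smul_comm]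
  congr 1
  simp only [mul_add, add_mul, smul_mul_assoc, mul_smul_comm, hlh, one_mul, mul_one]
  module

/-- Bracket of the lowering operator with a positive mode. -/
theorem wgt_bracket_neg (h x l F : R) (hx : h * x = x * (h + 1)) (hlx : l * x = x * l)
    (hlh : l * h = h * l) (hlF : l * F = F * l) (hF : h * F = F * (h - 1))
    (hFx : F * x = -(h + 1 - l)) (hxF : x * F = -(h - l)) (n : ℕ) :
    ⁅F, -(x ^ (n + 1) * (h + ((n : ℂ) + 1) • l))⁆ =
      (-(n : ℂ) - 2) • (-(x ^ n * (h + (n : ℂ) • l))) := by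
  have h1 := wgt_h_pow h x hx n
  have h2 : l * x ^ n = x ^ n * l := (Commute.pow_right hlx n)
  have e1 : F * (x ^ (n + 1) * (h + ((n : ℂ) + 1) • l)) =
      x ^ n * (-(h + ((n : ℂ) + 1) • (1 : R) - l) * (h + ((n : ℂ) + 1) • l)) := by
    rw [pow_succ', ← mul_assoc, ← mul_assoc, hFx, ← mul_assoc]
    congr 1
    rw [neg_mul, sub_mul, add_mul, h1, h2]
    simp only [mul_add, mul_sub, mul_neg, mul_smul_comm, mul_one, one_mul]
    module
  have e2 : (x ^ (n + 1) * (h + ((n : ℂ) + 1) • l)) * F =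
      x ^ n * (-(h - l) * (h - 1 + ((n : ℂ) + 1) • l)) := by
    have : (h + ((n : ℂ) + 1) • l) * F = F * (h - 1 + ((n : ℂ) + 1) • l) := by
      rw [add_mul, hF, smul_mul_assoc, hlF, mul_add, mul_smul_comm]
    rw [mul_assoc, this, pow_succ, mul_assoc, ← mul_assoc x, hxF]
  rw [Ring.lie_def, mul_neg, neg_mul, e1, e2, ← mul_neg (x ^ n), ← mul_neg (x ^ n), ← mul_neg (x ^ n),
    ← mul_sub, ← mul_smul_comm]
  congr 1
  simp only [mul_add, add_mul, sub_mul, mul_sub, neg_mul, smul_mul_assoc, mul_smul_comm, hlh,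
    one_mul, mul_one]
  module

end WittAlgebra

/-- If `(H + s)² - c` restricted to weight spaces is a nonzero scalar minus a nilpotent, it is
a unit. -/
theorem wgt_isUnit {V : Type*} [AddCommGroup V] [Module ℂ V] (μ₀ τ : ℂ)
    (H c : Module.End ℂ V) (s : ℂ)
    (hτ : ∀ n : ℤ, τ ≠ (μ₀ + 2 * n + s) ^ 2)
    (hcH : c * H = H * c)
    (hint : DirectSum.IsInternal fun n : ℤ =>
      LinearMap.ker (H - (μ₀ + 2 * n : ℂ) • (1 : Module.End ℂ V)))
    (hfd : ∀ n : ℤ, FiniteDimensional ℂ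
      (LinearMap.ker (H - (μ₀ + 2 * n : ℂ) • (1 : Module.End ℂ V)) : Submodule ℂ V))
    (hnil : ∀ n : ℤ, ∀ x ∈ LinearMap.ker (H - (μ₀ + 2 * n : ℂ) • (1 : Module.End ℂ V)),
      ∃ m : ℕ, (((c - τ • (1 : Module.End ℂ V)) ^ m : Module.End ℂ V)) x = 0) :
    IsUnit ((H + s • (1 : Module.End ℂ V)) * (H + s • (1 : Module.End ℂ V)) - c) := by
  set B := (H + s • (1 : Module.End ℂ V)) * (H + s • (1 : Module.End ℂ V)) - c with hB
  have mem : ∀ (n : ℤ) (x : V),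
      x ∈ LinearMap.ker (H - (μ₀ + 2 * n : ℂ) • (1 : Module.End ℂ V)) ↔
        H x = (μ₀ + 2 * n : ℂ) • x := by
    intro n x
    simp [LinearMap.mem_ker, sub_eq_zero]
  have hcx : ∀ x, c (H x) = H (c x) := fun x => by
    simpa using congrArg (fun f : Module.End ℂ V => f x) hcH
  have hBx : ∀ (n : ℤ) (x : V), H x = (μ₀ + 2 * n : ℂ) • x →
      B x = ((μ₀ + 2 * n + s) ^ 2 : ℂ) • x - c x := by
    intro n x hx
    simp only [hB, LinearMap.sub_apply, Module.End.mul_apply, LinearMap.add_apply,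
      LinearMap.smul_apply, Module.End.one_apply, map_add, map_smul, hx]
    module
  have hmap : ∀ n : ℤ, ∀ x ∈ LinearMap.ker (H - (μ₀ + 2 * n : ℂ) • (1 : Module.End ℂ V)),
      B x ∈ LinearMap.ker (H - (μ₀ + 2 * n : ℂ) • (1 : Module.End ℂ V)) := by
    intro n x hx
    rw [mem] at hx ⊢
    rw [hBx n x hx, map_sub, map_smul, ← hcx, hx, map_smul]
    module
  have hinj : ∀ n : ℤ, ∀ x ∈ LinearMap.ker (H - (μ₀ + 2 * n : ℂ) • (1 : Module.End ℂ V)),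
      B x = 0 → x = 0 := by
    intro n x hx h0
    obtain ⟨m, hm⟩ := hnil n x hx
    rw [mem] at hx
    rw [hBx n x hx] at h0
    have h1 : (c - τ • (1 : Module.End ℂ V)) x = ((μ₀ + 2 * n + s) ^ 2 - τ : ℂ) • x := by
      have : c x = ((μ₀ + 2 * n + s) ^ 2 : ℂ) • x := (sub_eq_zero.mp h0).symm
      simp only [LinearMap.sub_apply, LinearMap.smul_apply, Module.End.one_apply, this]
      module
    have h2 : ∀ k : ℕ, ((c - τ • (1 : Module.End ℂ V)) ^ k) x =
        ((μ₀ + 2 * n + s) ^ 2 - τ : ℂ) ^ k • x := by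
      intro k
      induction k with
      | zero => simp
      | succ k ih =>
        rw [pow_succ, Module.End.mul_apply, h1, map_smul, ih, smul_smul, ← pow_succ']
    rw [h2] at hm
    rcases smul_eq_zero.mp hm with h3 | h3
    · exact absurd (sub_eq_zero.mp (by by_contra hne; exact pow_ne_zero m hne h3)).symm (hτ n)
    · exact h3
  rw [Module.End.isUnit_iff]
  let Bn : ∀ n : ℤ, LinearMap.ker (H - (μ₀ + 2 * n : ℂ) • (1 : Module.End ℂ V)) →ₗ[ℂ]
      LinearMap.ker (H - (μ₀ + 2 * n : ℂ) • (1 : Module.End ℂ V)) :=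
    fun n => B.restrict (hmap n)
  have hBni : ∀ n, Function.Injective (Bn n) := by
    intro n
    rw [← LinearMap.ker_eq_bot, LinearMap.ker_eq_bot']
    intro x hx
    apply Subtype.ext
    exact hinj n x x.2 (congrArg Subtype.val hx)
  have hBns : ∀ n, Function.Surjective (Bn n) := fun n => by
    have := hfd n
    exact LinearMap.injective_iff_surjective.mp (hBni n)
  have hcomm : B ∘ₗ (DirectSum.coeLinearMap fun n : ℤ =>
      LinearMap.ker (H - (μ₀ + 2 * n : ℂ) • (1 : Module.End ℂ V))) =
      (DirectSum.coeLinearMap fun n : ℤ =>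
      LinearMap.ker (H - (μ₀ + 2 * n : ℂ) • (1 : Module.End ℂ V))) ∘ₗ DirectSum.lmap Bn := by
    apply DirectSum.linearMap_ext
    intro n
    ext x
    simp [Bn]
  have hbij : Function.Bijective (B ∘ (DirectSum.coeLinearMap fun n : ℤ =>
      LinearMap.ker (H - (μ₀ + 2 * n : ℂ) • (1 : Module.End ℂ V)))) := by
    rw [← LinearMap.coe_comp, hcomm, LinearMap.coe_comp]
    exact hint.comp ⟨(DirectSum.lmap_injective Bn).mpr hBni, (DirectSum.lmap_surjective Bn).mpr hBns⟩
  exact (Function.Bijective.of_comp_iff B hint).mp hbij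

/-- every object of the category `M̄^{ξ,τ}` (with `τ ≠ (μ+1)²` for all
`μ ∈ ξ`) possessing a square root of the Casimir operator commuting with the
sl(2)-action admits a compatible Witt_>-module structure for which the Casimir
operator is central. -/
theorem weight_module_wittGt_extension
    (V : Type*) [AddCommGroup V] [Module ℂ V] (μ₀ τ : ℂ)
    (hτ : ∀ n : ℤ, τ ≠ (μ₀ + 2 * n + 1) ^ 2)
    (E F H : Module.End ℂ V)
    (hEF : ⁅E, F⁆ = H) (hHE : ⁅H, E⁆ = (2 : ℂ) • E) (hHF : ⁅H, F⁆ = (-2 : ℂ) • F)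
    (hint : DirectSum.IsInternal fun n : ℤ =>
      LinearMap.ker (H - (μ₀ + 2 * n : ℂ) • (1 : Module.End ℂ V)))
    (hfd : ∀ n : ℤ, FiniteDimensional ℂ
      (LinearMap.ker (H - (μ₀ + 2 * n : ℂ) • (1 : Module.End ℂ V)) : Submodule ℂ V))
    (hnil : ∀ n : ℤ, ∀ x ∈ LinearMap.ker (H - (μ₀ + 2 * n : ℂ) • (1 : Module.End ℂ V)),
      ∃ m : ℕ, ((((H + 1) ^ 2 + (4 : ℂ) • (F * E) - τ • (1 : Module.End ℂ V)) ^ m : Module.End ℂ V)) x = 0)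
    (K : Module.End ℂ V)
    (hK2 : K * K = (H + 1) ^ 2 + (4 : ℂ) • (F * E))
    (hKE : ⁅K, E⁆ = 0) (hKF : ⁅K, F⁆ = 0) (hKH : ⁅K, H⁆ = 0) :
    ∃ ρ : ℤ → Module.End ℂ V, IsWittGtModule E F H ρ ∧
      ∀ i : ℤ, -1 ≤ i → ⁅(H + 1) ^ 2 + (4 : ℂ) • (F * E), ρ i⁆ = 0 := by
  set c := (H + 1) ^ 2 + (4 : ℂ) • (F * E) with hc
  have kE : K * E = E * K := sub_eq_zero.mp hKE
  have kF : K * F = F * K := sub_eq_zero.mp hKF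
  have kH : K * H = H * K := sub_eq_zero.mp hKH
  have cH : c * H = H * c := by
    rw [← hK2]; exact (Commute.mul_left (show Commute K H from kH) kH)
  have u0 := wgt_isUnit μ₀ τ H c 1 hτ cH hint hfd hnil
  have u1 := wgt_isUnit μ₀ τ H c (-1)
    (fun n => by have := hτ (n - 1); push_cast at this; convert this using 2; ring)
    cH hint hfd hnil
  rw [← hK2] at u0 u1
  have fac : ∀ s : ℂ, (H + s • (1 : Module.End ℂ V)) * (H + s • (1 : Module.End ℂ V)) - K * K =
      (H + s • (1 : Module.End ℂ V) + K) * (H + s • (1 : Module.End ℂ V) - K) := by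
    intro s
    simp only [mul_add, add_mul, mul_sub, kH, smul_mul_assoc, mul_smul_comm, one_mul, mul_one]
    module
  have com : ∀ s : ℂ, Commute (H + s • (1 : Module.End ℂ V) + K)
      (H + s • (1 : Module.End ℂ V) - K) := by
    intro s
    show _ = _
    simp only [mul_add, add_mul, mul_sub, sub_mul, kH, smul_mul_assoc, mul_smul_comm, one_mul,
      mul_one]
    module
  rw [fac, (com _).isUnit_mul_iff] at u0 u1
  obtain ⟨⟨P, PI, hP1, hP2⟩, hP⟩ := u0.1
  obtain ⟨⟨Q, QI, hQ1, hQ2⟩, hQ⟩ := u1.1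
  simp only at hP hQ
  have HE : H * E = E * H + (2 : ℂ) • E := by
    rw [← hHE, Ring.lie_def]; abel
  have HF : H * F = F * H - (2 : ℂ) • F := by
    have : H * F - F * H = (-2 : ℂ) • F := hHF
    rw [sub_eq_iff_eq_add] at this
    rw [this]; module
  have EF : E * F = F * E + H := by
    rw [← hEF, Ring.lie_def]; abel
  have hFE : (4 : ℂ) • (F * E) = K * K - (H + 1) * (H + 1) := by
    rw [hK2, hc, pow_two]; abel
  -- commutation with the inverse
  have PIc : ∀ Y, P * Y = Y * P → PI * Y = Y * PI := by
    intro Y hY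
    calc PI * Y = PI * (Y * P) * PI := by rw [mul_assoc, mul_assoc, hP1, mul_one]
      _ = Y * PI := by rw [← hY, ← mul_assoc, hP2, one_mul]
  have PIH : PI * H = H * PI := PIc H (by
    rw [hP]
    simp only [mul_add, add_mul, kH, smul_mul_assoc, mul_smul_comm, one_mul, mul_one])
  have PIK : PI * K = K * PI := PIc K (by
    rw [hP]
    simp only [mul_add, add_mul, kH, smul_mul_assoc, mul_smul_comm, one_mul, mul_one])
  have PF : P * F = F * Q := by
    rw [hP, hQ]
    simp only [mul_add, add_mul, HF, kF, smul_mul_assoc, mul_smul_comm, one_mul, mul_one]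
    module
  have PIF : PI * F = F * QI := by
    calc PI * F = PI * (F * Q) * QI := by rw [mul_assoc, mul_assoc, hQ1, mul_one]
      _ = F * QI := by rw [← PF, ← mul_assoc, hP2, one_mul]
  let h : Module.End ℂ V := (1/2 : ℂ) • H
  let l : Module.End ℂ V := (1/2 : ℂ) • (1 + K)
  let x : Module.End ℂ V := (2 : ℂ) • (E * PI)
  have hx : h * x = x * (h + 1) := by
    simp only [h, x, smul_mul_assoc, mul_smul_comm, mul_add, mul_one]
    rw [← mul_assoc, HE, add_mul, smul_mul_assoc, mul_assoc E PI H, PIH, mul_assoc]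
    module
  have Kx : K * x = x * K := by
    simp only [x, smul_mul_assoc, mul_smul_comm]
    rw [← mul_assoc, kE, mul_assoc, ← PIK, mul_assoc]
  have Kh : K * h = h * K := by
    simp only [h, smul_mul_assoc, mul_smul_comm, kH]
  have hlx : l * x = x * l := by
    simp only [l, smul_mul_assoc, mul_smul_comm, mul_add, add_mul, one_mul, mul_one, Kx]
  have hlh : l * h = h * l := by
    simp only [l, smul_mul_assoc, mul_smul_comm, mul_add, add_mul, one_mul, mul_one, Kh]
  have hlF : l * F = F * l := by
    simp only [l, smul_mul_assoc, mul_smul_comm, mul_add, add_mul, one_mul, mul_one, kF]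
  have hF' : h * F = F * (h - 1) := by
    simp only [h, smul_mul_assoc, mul_smul_comm, mul_sub, mul_one, HF]
    module
  have hFx : F * x = -(h + 1 - l) := by
    have e : (4 : ℂ) • (F * E) = -((H + 1 - K) * P) := by
      rw [hFE, hP]
      simp only [mul_add, add_mul, sub_mul, kH, smul_mul_assoc, mul_smul_comm, one_mul, mul_one]
      module
    have e2 : F * x = (1/2 : ℂ) • ((4 : ℂ) • (F * E) * PI) := by
      simp only [x, smul_mul_assoc, mul_smul_comm, mul_assoc]
      module
    rw [e2, e, neg_mul, mul_assoc, hP1, mul_one]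
    simp only [h, l]
    module
  have hxF : x * F = -(h - l) := by
    have e : (4 : ℂ) • (E * F) = -((H - 1 - K) * Q) := by
      rw [EF, smul_add, hFE, hQ]
      simp only [mul_add, add_mul, sub_mul, kH, smul_mul_assoc, mul_smul_comm, one_mul, mul_one]
      module
    have e2 : x * F = (1/2 : ℂ) • ((4 : ℂ) • (E * F) * QI) := by
      simp only [x, smul_mul_assoc, mul_assoc, PIF]
      module
    rw [e2, e, neg_mul, mul_assoc, hQ1, mul_one]
    simp only [h, l]
    module
  let ρ : ℤ → Module.End ℂ V := fun i =>
    if i = -1 then F else -(x ^ i.toNat * (h + (i : ℂ) • l))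
  have ρneg : ρ (-1) = F := by simp [ρ]
  have ρnat : ∀ n : ℕ, ρ (n : ℤ) = -(x ^ n * (h + (n : ℂ) • l)) := by
    intro n
    have : (n : ℤ) ≠ -1 := by omega
    simp [ρ, this]
  have key : ∀ n : ℕ, ⁅F, ρ (n : ℤ)⁆ = ((-1 - (n : ℤ) : ℤ) : ℂ) • ρ (-1 + (n : ℤ)) := by
    intro n
    cases n with
    | zero =>
      rw [ρnat]
      simp only [Nat.cast_zero, add_zero, ρneg, pow_zero, one_mul, zero_smul]
      rw [Ring.lie_def, mul_neg, neg_mul, hF', mul_sub]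
      push_cast
      module
    | succ k =>
      have e : (-1 + ((k + 1 : ℕ) : ℤ)) = (k : ℤ) := by push_cast; ring
      rw [e, ρnat, ρnat]
      have := wgt_bracket_neg h x l F hx hlx hlh hlF hF' hFx hxF k
      push_cast
      rw [this]
      congr 1
      ring
  have cases' : ∀ i : ℤ, -1 ≤ i → i = -1 ∨ ∃ n : ℕ, i = n := by
    intro i hi
    by_cases h1 : i = -1
    · exact Or.inl h1
    · exact Or.inr ⟨i.toNat, by omega⟩
  refine ⟨ρ, ⟨ρneg, ?_, ?_, ?_⟩, ?_⟩
  · have := ρnat 0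
    simp only [Nat.cast_zero, pow_zero, one_mul, zero_smul, add_zero] at this
    rw [this]
    simp only [h]
    module
  · have := ρnat 1
    simp only [Nat.cast_one, pow_one, one_smul] at this
    rw [this]
    have e : h + l = (1/2 : ℂ) • P := by
      rw [hP]; simp only [h, l]; module
    rw [e]
    simp only [x, smul_mul_assoc, mul_smul_comm]
    rw [mul_assoc, hP2, mul_one]
    module
  · intro i j hi hj
    rcases cases' i hi with rfl | ⟨m, rfl⟩ <;> rcases cases' j hj with rfl | ⟨n, rfl⟩
    · simp [Ring.lie_def]
    · rw [ρneg]; exact key n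
    · have sk : ⁅ρ (m : ℤ), F⁆ = -⁅F, ρ (m : ℤ)⁆ := by
        rw [Ring.lie_def, Ring.lie_def, neg_sub]
      rw [ρneg, sk, key m, add_comm, ← neg_smul]
      congr 1
      push_cast
      ring
    · have e : (m : ℤ) + n = ((m + n : ℕ) : ℤ) := by push_cast; rfl
      rw [e, ρnat, ρnat, ρnat, wgt_bracket h x l hx hlx hlh]
      push_cast
      rfl
  · intro i hi
    rw [← hK2, Ring.lie_def, sub_eq_zero]
    have kρ : Commute K (ρ i) := by
      rcases cases' i hi with rfl | ⟨n, rfl⟩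
      · rw [ρneg]; exact kF
      · rw [ρnat]
        have a1 : Commute K l :=
          (((Commute.one_right K).add_right (Commute.refl K)).smul_right _)
        exact (((show Commute K x from Kx).pow_right n).mul_right
          ((show Commute K h from Kh).add_right (a1.smul_right _))).neg_right
    exact kρ.mul_left kρ
end

section
/- Fix μ₀, τ ∈ ℂ with τ ≠ 0 and τ ≠ (μ+1)² for all μ ∈ ξ = μ₀+2ℤ. Let V be a complex vector space with a representation (E,F,H) of sl(2,ℂ) such that V is the internal direct sum of its weight spaces V_μ = ker(H − μ·id) for μ ∈ ξ, each V_μ is finite dimensional, and (c − τ) is nilpotent on each V_μ, where c = (H + id)² + 4F∘E. Suppose T ∈ End(V) satisfies the four relations [F,T] = 3E, [H,T] = 4T, [c,T] = 0, and [T,[E,T]] = −(1/6)·[E,[E,[E,T]]]. Then there exists a Witt_>-module structure (ρ_i)_{i≥−1} on V compatible with (E,F,H) with ρ₂ = T. -/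
lemma witt_pos {L : Type*} [LieRing L] [LieAlgebra ℂ L] (w : ℕ → L)
    (h1 : ∀ n : ℕ, 1 ≤ n → ⁅w 1, w n⁆ = (1 - (n : ℂ)) • w (n + 1))
    (h23 : ⁅w 2, w 3⁆ = (-1 : ℂ) • w 5) (h25 : ⁅w 2, w 5⁆ = (-3 : ℂ) • w 7) :
    ∀ n i j : ℕ, 1 ≤ i → 1 ≤ j → i + j = n → ⁅w i, w j⁆ = ((i : ℂ) - j) • w n := by
  intro n
  induction n using Nat.strong_induction_on with
  | _ n ih =>
  have R1 : ∀ i j : ℕ, 1 ≤ i → 1 ≤ j → i + j + 1 = n →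
      (1 - (i : ℂ)) • (⁅w (i + 1), w j⁆ - ((i : ℂ) + 1 - j) • w n)
        + (1 - (j : ℂ)) • (⁅w i, w (j + 1)⁆ - ((i : ℂ) - (j + 1)) • w n) = 0 := by
    intro i j hi hj hn
    have e := leibniz_lie (w 1) (w i) (w j)
    rw [ih (i + j) (by omega) i j hi hj rfl, h1 i hi, h1 j hj, lie_smul, smul_lie, lie_smul,
      h1 (i + j) (by omega), hn] at e
    push_cast at e
    linear_combination (norm := module) (-1 : ℂ) • e
  have key : ∀ m : ℕ, m + 4 = n → ⁅w 2, w (m + 2)⁆ = ((2 : ℂ) - (m + 2)) • w n := by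
    intro m hm
    rcases m with _ | _ | _ | _ | m
    · simp
    · subst hm
      norm_num at h23 ⊢; exact h23
    · have := R1 2 3 (by norm_num) (by norm_num) (by omega)
      norm_num at this ⊢
      linear_combination (norm := module) (-1/2 : ℂ) • this
    · subst hm
      norm_num at h25 ⊢; exact h25
    · have a1 := R1 2 (m + 5) (by norm_num) (by omega) (by omega)
      have a2 := R1 3 (m + 4) (by norm_num) (by omega) (by omega)
      have a3 := R1 4 (m + 3) (by norm_num) (by omega) (by omega)
      have e := leibniz_lie (w 2) (w 3) (w (m + 3))
      rw [ih (m + 6) (by omega) 3 (m + 3) (by omega) (by omega) (by omega),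
        ih 5 (by omega) 2 3 (by omega) (by omega) (by omega),
        ih (m + 5) (by omega) 2 (m + 3) (by omega) (by omega) (by omega),
        lie_smul, smul_lie, lie_smul] at e
      have hne : ((m : ℂ) + 4) * (m + 3) * (m + 2) + 6 * (m + 1) * (m + 4) + 6 * m ≠ 0 := by
        have : (((m + 4) * (m + 3) * (m + 2) + 6 * (m + 1) * (m + 4) + 6 * m : ℕ) : ℂ) ≠ 0 := by
          rw [Nat.cast_ne_zero]; positivity
        push_cast at this
        exact this
      push_cast at a1 a2 a3 e ⊢
      have hz : (((m : ℂ) + 4) * (m + 3) * (m + 2) + 6 * (m + 1) * (m + 4) + 6 * m) •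
          (⁅w 2, w (m + 6)⁆ - (2 - ((m : ℂ) + 6)) • w n) = 0 := by
        linear_combination (norm := module) (-6 : ℂ) • e + (-(6 * ((m : ℂ) + 1) + (m + 2) * (m + 3))) • a1
          + ((m : ℂ) + 2) • a2 + (-2 : ℂ) • a3
      rw [smul_eq_zero] at hz
      have hz := sub_eq_zero.mp (hz.resolve_left hne)
      convert hz using 2
      ring
  have all : ∀ i : ℕ, ∀ j : ℕ, 2 ≤ j → (i + 2) + j = n →
      ⁅w (i + 2), w j⁆ = (((i + 2 : ℕ) : ℂ) - j) • w n := by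
    intro i
    induction i with
    | zero =>
      intro j hj hn
      obtain ⟨m, rfl⟩ := Nat.exists_eq_add_of_le' hj
      have := key m (by omega)
      push_cast at this ⊢
      simpa using this
    | succ i ihi =>
      intro j hj hn
      have a := R1 (i + 2) j (by omega) (by omega) (by omega)
      have b := ihi (j + 1) (by omega) (by omega)
      rw [b] at a
      push_cast at a ⊢
      rw [sub_self, smul_zero, add_zero, smul_eq_zero] at a
      rcases a with a | a
      · exfalso
        have : ((i + 1 : ℕ) : ℂ) = 0 := by push_cast; linear_combination -a
        norm_cast at this
      · rw [sub_eq_zero] at a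
        convert a using 2
        ring
  intro i j hi hj hn
  rcases Nat.lt_or_ge i 2 with h | h
  · obtain rfl : i = 1 := by omega
    rw [h1 j hj, ← hn, add_comm 1 j]; simp
  · rcases Nat.lt_or_ge j 2 with h' | h'
    · obtain rfl : j = 1 := by omega
      rw [← lie_skew, h1 i hi, ← hn, ← neg_smul]; congr 1; push_cast; ring
    · obtain ⟨k, rfl⟩ := Nat.exists_eq_add_of_le' h
      exact all k j h' hn

noncomputable def wseq {L : Type*} [LieRing L] [LieAlgebra ℂ L] (E H T : L) : ℕ → L
  | 0 => (-(1/2) : ℂ) • H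
  | 1 => -E
  | 2 => T
  | n + 3 => ((-((n : ℂ) + 1))⁻¹) • ⁅-E, wseq E H T (n + 2)⁆

lemma wseq_ext {L : Type*} [LieRing L] [LieAlgebra ℂ L] (E F H T : L)
    (hEF : ⁅E, F⁆ = H) (hHE : ⁅H, E⁆ = (2 : ℂ) • E) (hHF : ⁅H, F⁆ = (-2 : ℂ) • F)
    (hFT : ⁅F, T⁆ = (3 : ℂ) • E) (hHT : ⁅H, T⁆ = (4 : ℂ) • T)
    (hTT : ⁅T, ⁅E, T⁆⁆ = (-(1/6) : ℂ) • ⁅E, ⁅E, ⁅E, T⁆⁆⁆)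
    (h7 : (20 : ℂ) • ⁅T, ⁅E, ⁅E, ⁅E, T⁆⁆⁆⁆ = (-3 : ℂ) • ⁅E, ⁅E, ⁅E, ⁅E, ⁅E, T⁆⁆⁆⁆⁆) :
    ∃ ρ : ℤ → L, (ρ (-1) = F ∧ ρ 0 = (-(1/2) : ℂ) • H ∧ ρ 1 = -E ∧
    ∀ i j : ℤ, -1 ≤ i → -1 ≤ j → ⁅ρ i, ρ j⁆ = ((i - j : ℤ) : ℂ) • ρ (i + j)) ∧ ρ 2 = T := by
  obtain ⟨w, hw⟩ : ∃ w, w = wseq E H T := ⟨_, rfl⟩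
  have w0 : w 0 = (-(1/2) : ℂ) • H := by rw [hw, wseq]
  have w1 : w 1 = -E := by rw [hw, wseq]
  have w2 : w 2 = T := by rw [hw, wseq]
  have wn : ∀ n : ℕ, w (n + 3) = ((-((n : ℂ) + 1))⁻¹) • ⁅w 1, w (n + 2)⁆ := by
    intro n; rw [w1, hw, wseq]
  have h1 : ∀ n : ℕ, 1 ≤ n → ⁅w 1, w n⁆ = (1 - (n : ℂ)) • w (n + 1) := by
    intro n hn
    rcases n with _ | _ | n
    · omega
    · simp
    · have : (-((n : ℂ) + 1)) ≠ 0 := by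
        rw [neg_ne_zero]; exact_mod_cast Nat.succ_ne_zero n
      rw [wn n, smul_smul]
      push_cast
      rw [show (1 - ((n : ℂ) + 1 + 1)) = -((n : ℂ) + 1) by ring, mul_inv_cancel₀ this, one_smul]
  have w3 : w 3 = ⁅E, T⁆ := by
    rw [wn 0, w1, zero_add, w2, neg_lie]; norm_num
  have w4 : w 4 = (1/2 : ℂ) • ⁅E, ⁅E, T⁆⁆ := by
    rw [wn 1, w1, w3, neg_lie, smul_neg, ← neg_smul]; norm_num
  have w5 : w 5 = (1/6 : ℂ) • ⁅E, ⁅E, ⁅E, T⁆⁆⁆ := by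
    rw [wn 2, w1, w4, neg_lie, smul_neg, ← neg_smul, lie_smul, smul_smul]; norm_num
  have w6 : w 6 = (1/24 : ℂ) • ⁅E, ⁅E, ⁅E, ⁅E, T⁆⁆⁆⁆ := by
    rw [wn 3, w1, w5, neg_lie, smul_neg, ← neg_smul, lie_smul, smul_smul]; norm_num
  have w7 : w 7 = (1/120 : ℂ) • ⁅E, ⁅E, ⁅E, ⁅E, ⁅E, T⁆⁆⁆⁆⁆ := by
    rw [wn 4, w1, w6, neg_lie, smul_neg, ← neg_smul, lie_smul, smul_smul]; norm_num
  have h23 : ⁅w 2, w 3⁆ = (-1 : ℂ) • w 5 := by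
    rw [w2, w3, w5, hTT]; module
  have h25 : ⁅w 2, w 5⁆ = (-3 : ℂ) • w 7 := by
    rw [w2, w5, w7, lie_smul]
    linear_combination (norm := module) (1/120 : ℂ) • h7
  have P := witt_pos w h1 h23 h25
  have W0 : ∀ n : ℕ, ⁅w 0, w n⁆ = (-(n : ℂ)) • w n := by
    intro n
    induction n using Nat.strong_induction_on with
    | _ n ih =>
    rcases n with _ | _ | _ | n
    · simp
    · rw [zero_add, w0, w1, smul_lie, lie_neg, hHE]; push_cast; module
    · rw [w0, w2, smul_lie, hHT]; norm_num; module
    · have b : ⁅w 0, w 1⁆ = (-(1 : ℂ)) • w 1 := by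
        rw [w0, w1, smul_lie, lie_neg, hHE]; push_cast; module
      rw [wn n, lie_smul, leibniz_lie, b, ih (n + 2) (by omega), smul_lie, lie_smul]
      push_cast
      module
  have WF : ∀ n : ℕ, ⁅F, w (n + 1)⁆ = (-(n + 2 : ℂ)) • w n := by
    intro n
    induction n with
    | zero => rw [zero_add, w1, w0, lie_neg, lie_skew, hEF]; norm_num; module
    | succ n ih =>
      rcases n with _ | n
      · rw [w2, hFT, w1]; push_cast; module
      · have hne : ((n : ℂ) + 1) ≠ 0 := by exact_mod_cast Nat.succ_ne_zero n
        have b : ⁅F, w 1⁆ = (-2 : ℂ) • w 0 := by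
          rw [w1, w0, lie_neg, lie_skew, hEF]; norm_num; module
        rw [show n + 1 + 1 + 1 = n + 3 by ring, wn n, lie_smul, leibniz_lie, b, ih, smul_lie,
          lie_smul, W0, h1 (n + 1) (by omega), smul_smul, smul_smul, ← add_smul, smul_smul]
        congr 1
        push_cast
        field_simp
        ring
  have W : ∀ i j : ℕ, ⁅w i, w j⁆ = ((i : ℂ) - j) • w (i + j) := by
    intro i j
    rcases Nat.eq_zero_or_pos i with rfl | hi
    · rw [W0, zero_add]; simp
    · rcases Nat.eq_zero_or_pos j with rfl | hj
      · rw [← lie_skew, W0, add_zero]; simp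
      · exact P _ i j hi hj rfl
  refine ⟨fun k => if k = -1 then F else w k.toNat, ⟨by simp, ?_, ?_, ?_⟩, ?_⟩
  · simp [w0]
  · simp [w1]
  · have key : ∀ j : ℤ, 0 ≤ j → ⁅F, w j.toNat⁆ = ((-1 - j : ℤ) : ℂ) •
        (if -1 + j = -1 then F else w (-1 + j).toNat) := by
      intro j hj
      lift j to ℕ using hj
      rcases j with _ | j
      · simp only [Int.toNat_natCast, w0]
        rw [lie_smul, ← lie_skew, hHF]; simp
      · rw [if_neg (by push_cast; omega), Int.toNat_natCast, WF,
          show ((-1 + ((j + 1 : ℕ) : ℤ))).toNat = j by omega]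
        congr 1
        push_cast; ring
    intro i j hi hj
    by_cases h : i = -1 <;> by_cases h' : j = -1
    · subst h; subst h'; simp
    · subst h
      simp only [if_true, if_neg h']
      exact key j (by omega)
    · subst h'
      simp only [if_true, if_neg h]
      rw [← lie_skew, key i (by omega), add_comm i, ← neg_smul]
      congr 1
      push_cast; ring
    · simp only [if_neg h, if_neg h', if_neg (show i + j ≠ -1 by omega)]
      lift i to ℕ using (by omega)
      lift j to ℕ using (by omega)
      simp only [Int.toNat_natCast, W, ← Nat.cast_add]
      push_cast; rfl
  · simp [w2]

lemma skew_mul {A S : Type*} [Ring A] [CommRing S] (φ : S →+* A) (σ : S →+* S) (D : A)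
    (hD : ∀ s, φ s * D = D * φ (σ s)) (i j : ℕ) (a b : S) :
    (D ^ i * φ a) * (D ^ j * φ b) = D ^ (i + j) * φ ((σ^[j]) a * b) := by
  have h : ∀ (j : ℕ) (a : S), φ a * D ^ j = D ^ j * φ ((σ^[j]) a) := by
    intro j
    induction j with
    | zero => intro a; simp
    | succ j ih =>
      intro a
      rw [pow_succ, ← mul_assoc, ih, mul_assoc, hD, Function.iterate_succ_apply', mul_assoc]
  rw [map_mul, pow_add, mul_assoc, ← mul_assoc (φ a), h]
  simp only [mul_assoc]

lemma skew_lie {A S : Type*} [Ring A] [CommRing S] (φ : S →+* A) (σ : S →+* S) (D : A)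
    (hD : ∀ s, φ s * D = D * φ (σ s)) (i j : ℕ) (a b : S) :
    ⁅D ^ i * φ a, D ^ j * φ b⁆ = D ^ (i + j) * φ ((σ^[j]) a * b - (σ^[i]) b * a) := by
  rw [Ring.lie_def, skew_mul φ σ D hD, skew_mul φ σ D hD, add_comm j i, map_sub, mul_sub]

lemma deg7 {A S : Type*} [Ring A] [Algebra ℂ A] [CommRing S] (φ : S →+* A) (σ : S →+* S) (D : A)
    (hD : ∀ s, φ s * D = D * φ (σ s)) (hu : IsUnit D) (h c p : S)
    (hh : σ h = h + 2) (hc : σ c = c) (hp : σ p = p) (E T : A)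
    (hE : E = D * φ (c - h ^ 2))
    (hT : T = D ^ 2 * φ (p - 2 * (h + 1) * (h ^ 2 + 2 * h - 3 * c)))
    (h5 : ⁅T, ⁅E, T⁆⁆ = (-(1/6) : ℂ) • ⁅E, ⁅E, ⁅E, T⁆⁆⁆) :
    (20 : ℂ) • ⁅T, ⁅E, ⁅E, ⁅E, T⁆⁆⁆⁆ = (-3 : ℂ) • ⁅E, ⁅E, ⁅E, ⁅E, ⁅E, T⁆⁆⁆⁆⁆ := by
  have hE1 : E = D ^ 1 * φ (c - h ^ 2) := by rw [hE, pow_one]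
  set e := c - h ^ 2 with he
  set t := p - 2 * (h + 1) * (h ^ 2 + 2 * h - 3 * c) with ht
  have L := skew_lie φ σ D hD
  have i1 : ∀ s, (σ^[1]) s = σ s := fun s => rfl
  have i2 : ∀ s, (σ^[2]) s = σ (σ s) := fun s => rfl
  have i3 : ∀ s, (σ^[3]) s = σ (σ (σ s)) := fun s => rfl
  have i4 : ∀ s, (σ^[4]) s = σ (σ (σ (σ s))) := fun s => rfl
  have i5 : ∀ s, (σ^[5]) s = σ (σ (σ (σ (σ s)))) := fun s => rfl
  have i6 : ∀ s, (σ^[6]) s = σ (σ (σ (σ (σ (σ s))))) := fun s => rfl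
  have h2 : σ 2 = 2 := map_ofNat σ 2
  have h3 : σ 3 = 3 := map_ofNat σ 3
  obtain ⟨t3, h_t3⟩ : ∃ t3, t3 = (σ^[2]) e * t - (σ^[1]) t * e := ⟨_, rfl⟩
  obtain ⟨t4, h_t4⟩ : ∃ t4, t4 = (σ^[3]) e * t3 - (σ^[1]) t3 * e := ⟨_, rfl⟩
  obtain ⟨t5, h_t5⟩ : ∃ t5, t5 = (σ^[4]) e * t4 - (σ^[1]) t4 * e := ⟨_, rfl⟩
  obtain ⟨t6, h_t6⟩ : ∃ t6, t6 = (σ^[5]) e * t5 - (σ^[1]) t5 * e := ⟨_, rfl⟩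
  obtain ⟨t7, h_t7⟩ : ∃ t7, t7 = (σ^[6]) e * t6 - (σ^[1]) t6 * e := ⟨_, rfl⟩
  have l3 : ⁅E, T⁆ = D ^ 3 * φ t3 := by rw [hE1, hT, L, h_t3]
  have l4 : ⁅E, ⁅E, T⁆⁆ = D ^ 4 * φ t4 := by rw [l3, hE1, L, h_t4]
  have l5 : ⁅E, ⁅E, ⁅E, T⁆⁆⁆ = D ^ 5 * φ t5 := by rw [l4, hE1, L, h_t5]
  have l6 : ⁅E, ⁅E, ⁅E, ⁅E, T⁆⁆⁆⁆ = D ^ 6 * φ t6 := by rw [l5, hE1, L, h_t6]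
  have l7 : ⁅E, ⁅E, ⁅E, ⁅E, ⁅E, T⁆⁆⁆⁆⁆ = D ^ 7 * φ t7 := by rw [l6, hE1, L, h_t7]
  have m5 : ⁅T, ⁅E, T⁆⁆ = D ^ 5 * φ ((σ^[3]) t * t3 - (σ^[2]) t3 * t) := by rw [l3, hT, L]
  have m7 : ⁅T, ⁅E, ⁅E, ⁅E, T⁆⁆⁆⁆ = D ^ 7 * φ ((σ^[5]) t * t5 - (σ^[2]) t5 * t) := by
    rw [l5, hT, L]
  simp only [i1, i2, i3, i4, i5, i6] at h_t3 h_t4 h_t5 h_t6 h_t7 m5 m7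
  simp only [he, ht, map_sub, map_mul, map_add, map_pow, hh, hc, hp, map_one, h2, h3] at h_t3
  ring_nf at h_t3
  have hn : ∀ (n : ℕ) [n.AtLeastTwo], σ (OfNat.ofNat n) = OfNat.ofNat n := fun n _ => map_ofNat σ n
  simp only [h_t3, he, map_sub, map_mul, map_add, map_neg, map_pow, hh, hc, hp, map_one, hn] at h_t4
  ring_nf at h_t4
  simp only [h_t4, he, map_sub, map_mul, map_add, map_neg, map_pow, hh, hc, hp, map_one, hn] at h_t5
  ring_nf at h_t5
  simp only [h_t5, he, map_sub, map_mul, map_add, map_neg, map_pow, hh, hc, hp, map_one, hn] at h_t6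
  ring_nf at h_t6
  simp only [h_t6, he, map_sub, map_mul, map_add, map_neg, map_pow, hh, hc, hp, map_one, hn] at h_t7
  ring_nf at h_t7
  have q5 : 6 * (σ (σ (σ t)) * t3 - σ (σ t3) * t) + t5
      = 192 * (p ^ 2 - 16 * c * (1 - c) ^ 2) := by
    simp only [h_t3, h_t5, ht, map_sub, map_mul, map_add, map_neg, map_pow, hh, hc, hp, map_one, hn]
    ring
  have q7 : 20 * (σ (σ (σ (σ (σ t)))) * t5 - σ (σ t5) * t) + 3 * t7
      = 46080 * (176 + 60 * h + 5 * h ^ 2 + c) * (p ^ 2 - 16 * c * (1 - c) ^ 2) := by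
    simp only [h_t5, h_t7, ht, map_sub, map_mul, map_add, map_neg, map_pow, hh, hc, hp, map_one, hn]
    ring
  have hnum : ∀ (n : ℕ) (a : A), (n : ℂ) • a = (n : A) * a := by
    intro n a; rw [Nat.cast_smul_eq_nsmul, nsmul_eq_mul]
  have hz : φ (p ^ 2 - 16 * c * (1 - c) ^ 2) = 0 := by
    have e1 : (6 : ℂ) • ⁅T, ⁅E, T⁆⁆ + ⁅E, ⁅E, ⁅E, T⁆⁆⁆ = 0 := by
      rw [h5]; module
    rw [m5, l5, ← mul_smul_comm, ← mul_add] at e1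
    have e2 := (hu.pow 5).mul_right_eq_zero.mp e1
    have e3 := hnum 6 (φ (σ (σ (σ t)) * t3 - σ (σ t3) * t))
    have e4 := hnum 192 (φ (p ^ 2 - 16 * c * (1 - c) ^ 2))
    have e5 := congrArg φ q5
    push_cast at e3 e4
    rw [map_add, map_mul, map_mul, map_ofNat, map_ofNat, ← e3, ← e4, e2] at e5
    exact (smul_eq_zero.mp e5.symm).resolve_left (by norm_num)
  have e5 := congrArg φ q7
  rw [map_mul _ _ (p ^ 2 - 16 * c * (1 - c) ^ 2), hz, mul_zero, map_add, map_mul, map_mul _ 3,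
    map_ofNat, map_ofNat] at e5
  have e3 := hnum 20 (φ (σ (σ (σ (σ (σ t)))) * t5 - σ (σ t5) * t))
  have e4 := hnum 3 (φ t7)
  push_cast at e3 e4
  rw [← e3, ← e4] at e5
  rw [m7, l7, neg_smul, ← add_eq_zero_iff_eq_neg, ← mul_smul_comm, ← mul_smul_comm, ← mul_add, e5,
    mul_zero]

open scoped IsMulCommutative in
lemma exists_phi {A : Type*} [Ring A] [Algebra ℂ A] (h c p : A) (hc : h * c = c * h)
    (hp : h * p = p * h) (cp : c * p = p * c) :
    ∃ φ : MvPolynomial (Fin 3) ℂ →ₐ[ℂ] A, φ (MvPolynomial.X 0) = h ∧ φ (MvPolynomial.X 1) = c ∧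
      φ (MvPolynomial.X 2) = p := by
  have hcomm : ∀ x ∈ ({h, c, p} : Set A), ∀ y ∈ ({h, c, p} : Set A), x * y = y * x := by
    intro x hx y hy
    simp only [Set.mem_insert_iff, Set.mem_singleton_iff] at hx hy
    rcases hx with rfl | rfl | rfl <;> rcases hy with rfl | rfl | rfl <;>
      first | rfl | assumption | (symm; assumption)
  have := Algebra.isMulCommutative_adjoin ℂ hcomm
  have hm : ∀ x ∈ ({h, c, p} : Set A), x ∈ Algebra.adjoin ℂ ({h, c, p} : Set A) :=
    fun x hx => Algebra.subset_adjoin hx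
  let f : Fin 3 → Algebra.adjoin ℂ ({h, c, p} : Set A) :=
    ![⟨h, hm h (by simp)⟩, ⟨c, hm c (by simp)⟩, ⟨p, hm p (by simp)⟩]
  refine ⟨(Algebra.adjoin ℂ ({h, c, p} : Set A)).val.comp (MvPolynomial.aeval f), ?_, ?_, ?_⟩ <;>
    simp [f]

open MvPolynomial in
lemma deg7_of_unit {A : Type*} [Ring A] [Algebra ℂ A] (E F H T : A) (hu : IsUnit F)
    (hEF : ⁅E, F⁆ = H) (hHE : ⁅H, E⁆ = (2 : ℂ) • E) (hHF : ⁅H, F⁆ = (-2 : ℂ) • F)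
    (hFT : ⁅F, T⁆ = (3 : ℂ) • E)
    (hHT : ⁅H, T⁆ = (4 : ℂ) • T)
    (hcT : ⁅(H + 1) ^ 2 + (4 : ℂ) • (F * E), T⁆ = 0)
    (hTT : ⁅T, ⁅E, T⁆⁆ = (-(1/6) : ℂ) • ⁅E, ⁅E, ⁅E, T⁆⁆⁆) :
    (20 : ℂ) • ⁅T, ⁅E, ⁅E, ⁅E, T⁆⁆⁆⁆ = (-3 : ℂ) • ⁅E, ⁅E, ⁅E, ⁅E, ⁅E, T⁆⁆⁆⁆⁆ := by
  have hnum : ∀ (n : ℕ) (a : A), (n : ℂ) • a = (n : A) * a := by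
    intro n a; rw [Nat.cast_smul_eq_nsmul, nsmul_eq_mul]
  have n2 : ∀ a : A, (2 : ℂ) • a = 2 * a := fun a => by simpa using hnum 2 a
  have n3 : ∀ a : A, (3 : ℂ) • a = 3 * a := fun a => by simpa using hnum 3 a
  have n4 : ∀ a : A, (4 : ℂ) • a = 4 * a := fun a => by simpa using hnum 4 a
  rw [n4] at hcT
  obtain ⟨h, hh⟩ : ∃ h, h = H + 1 := ⟨_, rfl⟩
  obtain ⟨c, hc⟩ : ∃ c, c = h ^ 2 + 4 * (F * E) := ⟨_, rfl⟩
  have H' : H = h - 1 := by rw [hh]; abel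
  rw [← hh, ← hc] at hcT
  -- basic commutation rules
  have sF : SemiconjBy F (h - 2) h := by
    rw [Ring.lie_def, neg_smul, n2, H'] at hHF
    have e : h * F = F * h - 2 * F := by
      have : h * F - F * h = -(2 * F) := by rw [← hHF]; noncomm_ring
      rw [sub_eq_iff_eq_add] at this; rw [this]; abel
    rw [SemiconjBy, e]; noncomm_ring
  have sE : SemiconjBy E (h + 2) h := by
    rw [Ring.lie_def, n2, H'] at hHE
    have e : h * E = E * h + 2 * E := by
      have : h * E - E * h = (2 * E) := by rw [← hHE]; noncomm_ring
      rw [sub_eq_iff_eq_add] at this; rw [this]; abel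
    rw [SemiconjBy, e]; noncomm_ring
  have sT : SemiconjBy T (h + 4) h := by
    rw [Ring.lie_def, n4, H'] at hHT
    have e : h * T = T * h + 4 * T := by
      have : h * T - T * h = (4 * T) := by rw [← hHT]; noncomm_ring
      rw [sub_eq_iff_eq_add] at this; rw [this]; abel
    rw [SemiconjBy, e]; noncomm_ring
  have EF : E * F = F * E + h - 1 := by
    rw [Ring.lie_def, H', sub_eq_iff_eq_add] at hEF; rw [hEF]; abel
  have s2 : ∀ (k : ℕ) (a x y : A), SemiconjBy a x y → SemiconjBy a (x + k) (y + k) :=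
    fun k a x y hs => hs.add_right (Nat.cast_commute k a).symm
  have cF : Commute c F := by
    have e1 : h ^ 2 * F = F * (h - 2) ^ 2 := ((sF.pow_right 2).eq).symm
    have : c * F = F * c := by
      rw [hc, add_mul, e1, mul_assoc 4, mul_assoc F E F, EF]; noncomm_ring
    exact this
  have ch : Commute c h := by
    have e : Commute (F * E) h := by
      have a := s2 2 F _ _ sF
      have : SemiconjBy F h (h + 2) := by simpa using a
      have : SemiconjBy (F * E) (h + 2) (h + 2) := this.mul_left sE
      have := SemiconjBy.sub_right this (Commute.ofNat_right (F * E) 2)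
      have : SemiconjBy (F * E) h h := by simpa using this
      exact this
    rw [hc]
    exact ((Commute.refl h).pow_left 2).add_left ((Commute.ofNat_left 4 h).mul_left e)
  have cT : Commute c T := by
    rw [Ring.lie_def, sub_eq_zero] at hcT; exact hcT
  obtain ⟨p, hp⟩ : ∃ p, p = 16 * (F ^ 2 * T) + 2 * (h + 1) * (h ^ 2 + 2 * h - 3 * c) := ⟨_, rfl⟩
  have sF' : SemiconjBy F h (h + 2) := by simpa using s2 2 F _ _ sF
  have pc : Commute p c := by
    have a1 : Commute (16 * (F ^ 2 * T)) c :=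
      (Commute.ofNat_left 16 c).mul_left ((cF.symm.pow_left 2).mul_left cT.symm)
    have a2 : Commute (h + 1) c := ch.symm.add_left (Commute.one_left c)
    have a3 : Commute (h ^ 2 + 2 * h - 3 * c) c :=
      ((ch.symm.pow_left 2).add_left ((Commute.ofNat_left 2 c).mul_left ch.symm)).sub_left
        ((Commute.ofNat_left 3 c).mul_left (Commute.refl c))
    rw [hp]
    exact a1.add_left (((Commute.ofNat_left 2 c).mul_left a2).mul_left a3)
  have ph : Commute p h := by
    have b1 : SemiconjBy (F ^ 2) h (h + 4) := by
      have := (s2 2 F _ _ sF').mul_left sF'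
      rw [← pow_two] at this
      have e4 : h + 2 + ((2 : ℕ) : A) = h + 4 := by
        push_cast; rw [add_assoc]; norm_num
      rw [e4] at this
      exact this
    have b2 : SemiconjBy (F ^ 2 * T) (h + 4) (h + 4) := b1.mul_left sT
    have b3 : Commute (F ^ 2 * T) h := by
      have := SemiconjBy.sub_right b2 (Commute.ofNat_right (F ^ 2 * T) 4)
      have : SemiconjBy (F ^ 2 * T) h h := by simpa using this
      exact this
    have a1 : Commute (16 * (F ^ 2 * T)) h := (Commute.ofNat_left 16 h).mul_left b3
    have a2 : Commute (h + 1) h := (Commute.refl h).add_left (Commute.one_left h)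
    have a3 : Commute (h ^ 2 + 2 * h - 3 * c) h :=
      (((Commute.refl h).pow_left 2).add_left ((Commute.ofNat_left 2 h).mul_left
        (Commute.refl h))).sub_left ((Commute.ofNat_left 3 h).mul_left ch)
    rw [hp]
    exact a1.add_left (((Commute.ofNat_left 2 h).mul_left a2).mul_left a3)
  have pF : SemiconjBy F p p := by
    have f2 : SemiconjBy F 2 2 := Commute.ofNat_right F 2
    have f3 : SemiconjBy F 3 3 := Commute.ofNat_right F 3
    have f1 : SemiconjBy F 1 1 := Commute.one_right F
    have fc : SemiconjBy F c c := cF.symm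
    have q := (f2.mul_right (sF.add_right f1)).mul_right
      (((sF.pow_right 2).add_right (f2.mul_right sF)).sub_right (f3.mul_right fc))
    have TF : T * F = F * T - 3 * E := by
      rw [Ring.lie_def, n3] at hFT; rw [← hFT]; abel
    have FE : 4 * (F * E) = c - h ^ 2 := by rw [hc]; abel
    have FFE : 16 * (F ^ 2 * (3 * E)) = F * (12 * (c - h ^ 2)) := by
      rw [← FE]; noncomm_ring
    show F * p = p * F
    rw [hp, add_mul, ← q.eq, mul_assoc 16, mul_assoc (F ^ 2), TF, mul_sub (F ^ 2), mul_sub 16, FFE]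
    noncomm_ring
  obtain ⟨φ, φh, φc, φp⟩ := exists_phi h c p ch.symm.eq ph.symm.eq pc.symm.eq
  obtain ⟨U, rfl⟩ := hu
  let σ : MvPolynomial (Fin 3) ℂ →ₐ[ℂ] MvPolynomial (Fin 3) ℂ :=
    aeval ![X 0 + 2, X 1, X 2]
  have σ0 : σ (X 0) = X 0 + 2 := by simp [σ]
  have σ1 : σ (X 1) = X 1 := by simp [σ]
  have σ2 : σ (X 2) = X 2 := by simp [σ]
  obtain ⟨D, hD⟩ : ∃ D : A, D = (1/4 : ℂ) • (↑U⁻¹ : A) := ⟨_, rfl⟩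
  have sm : ∀ x y : A, SemiconjBy (↑U⁻¹ : A) x y → y * D = D * x := by
    intro x y hs
    rw [hD, mul_smul_comm, smul_mul_assoc, hs.eq]
  have Dh : h * D = D * (h + 2) := sm _ _ (SemiconjBy.units_inv_symm_left sF')
  have Dc : c * D = D * c := sm _ _ (SemiconjBy.units_inv_symm_left cF.symm)
  have Dp : p * D = D * p := sm _ _ (SemiconjBy.units_inv_symm_left pF)
  have hφ : ∀ s, φ s * D = D * φ (σ s) := by
    intro s
    induction s using MvPolynomial.induction_on with
    | C a =>
      rw [← MvPolynomial.algebraMap_eq, AlgHom.commutes σ, AlgHom.commutes, Algebra.commutes]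
    | add a b ha hb => rw [map_add, map_add, map_add, add_mul, mul_add, ha, hb]
    | mul_X a i ha =>
      have hi : φ (X i) * D = D * φ (σ (X i)) := by
        fin_cases i
        · show φ (X 0) * D = D * φ (σ (X 0))
          rw [σ0, map_add, φh, map_ofNat, Dh]
        · show φ (X 1) * D = D * φ (σ (X 1))
          rw [σ1, φc, Dc]
        · show φ (X 2) * D = D * φ (σ (X 2))
          rw [σ2, φp, Dp]
      rw [map_mul, map_mul, map_mul, mul_assoc, hi, ← mul_assoc, ha, mul_assoc]
  have DF : D * (4 * (U : A)) = 1 := by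
    rw [hD, ← n4, smul_mul_smul_comm, Units.inv_mul]; norm_num
  have FD : (4 * (U : A)) * D = 1 := by
    rw [hD, ← n4, smul_mul_smul_comm, Units.mul_inv]; norm_num
  refine deg7 φ.toRingHom σ.toRingHom D hφ
    ⟨⟨D, 4 * (U : A), DF, FD⟩, rfl⟩ (X 0) (X 1) (X 2) σ0 σ1 σ2 E T ?_ ?_ hTT
  · have : φ (X 1 - X 0 ^ 2) = c - h ^ 2 := by rw [map_sub, map_pow, φc, φh]
    show E = D * φ (X 1 - X 0 ^ 2)
    rw [this, hc, add_sub_cancel_left, ← mul_assoc 4, ← mul_assoc, DF, one_mul]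
  · have : φ (X 2 - 2 * (X 0 + 1) * (X 0 ^ 2 + 2 * X 0 - 3 * X 1)) = 16 * ((U : A) ^ 2 * T) := by
      simp only [map_sub, map_mul, map_add, map_pow, φc, φh, φp, map_ofNat, map_one]
      rw [hp]; abel
    show T = D ^ 2 * φ (X 2 - 2 * (X 0 + 1) * (X 0 ^ 2 + 2 * X 0 - 3 * X 1))
    have e : 16 * ((U : A) ^ 2 * T) = (4 * (U : A)) * ((4 * (U : A)) * T) := by noncomm_ring
    rw [this, e, pow_two, mul_assoc D D, ← mul_assoc D (4 * (U : A)), DF, one_mul, ← mul_assoc, DF,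
      one_mul]

lemma inj_of_internal {V : Type*} [AddCommGroup V] [Module ℂ V] (W : ℤ → Submodule ℂ V)
    (hint : DirectSum.IsInternal W) (Q : Module.End ℂ V) (hQ : ∀ n, ∀ v ∈ W n, Q v ∈ W n)
    (hinj : ∀ n, ∀ v ∈ W n, Q v = 0 → v = 0) : Function.Injective Q := by
  rw [injective_iff_map_eq_zero]
  intro v hv
  obtain ⟨x, rfl⟩ := hint.2 v
  have comp : ∀ x, DirectSum.coeLinearMap W (DirectSum.lmap (fun n => Q.restrict (hQ n)) x)
      = Q (DirectSum.coeLinearMap W x) := by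
    intro x
    induction x using DirectSum.induction_on with
    | zero => simp
    | of i x =>
      rw [DirectSum.lmap_of, DirectSum.coeLinearMap_of, DirectSum.coeLinearMap_of]; rfl
    | add x y hx hy => simp only [map_add, hx, hy]
  have h0 : DirectSum.lmap (fun n => Q.restrict (hQ n)) x = 0 := by
    apply hint.1
    have := comp x
    rw [show DirectSum.coeLinearMap W x = (DirectSum.coeAddMonoidHom W) x from rfl, hv] at this
    rw [map_zero]
    exact this
  have : x = 0 := by
    refine DFinsupp.ext fun n => ?_
    have e := congrArg (fun y => ((y n : W n) : V)) h0
    apply Subtype.ext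
    exact hinj n _ (x n).2 e
  rw [this, map_zero]

lemma local_inj {V : Type*} [AddCommGroup V] [Module ℂ V] (N : Module.End ℂ V) (δ : ℂ) (hδ : δ ≠ 0)
    (v : V) (m : ℕ) (hm : (N ^ m) v = 0) (h : N v + δ • v = 0) : v = 0 := by
  have hp : ∀ k : ℕ, (N ^ k) v = (-δ) ^ k • v := by
    intro k
    induction k with
    | zero => simp
    | succ k ih =>
      have e : N v = (-δ) • v := by rw [neg_smul]; exact eq_neg_of_add_eq_zero_left h
      rw [pow_succ, Module.End.mul_apply, e, map_smul, ih, smul_smul, pow_succ, mul_comm]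
  rw [hp m] at hm
  exact (smul_eq_zero.mp hm).resolve_left (pow_ne_zero _ (neg_ne_zero.mpr hδ))

lemma local_surj {V : Type*} [AddCommGroup V] [Module ℂ V] (N : Module.End ℂ V) (δ : ℂ)
    (hδ : δ ≠ 0) (K : Submodule ℂ V) (hK : ∀ u ∈ K, N u ∈ K) (m : ℕ) :
    ∀ v ∈ K, (N ^ m) v = 0 → ∃ w ∈ K, N w + δ • w = v := by
  induction m with
  | zero => intro v hv h; exact ⟨0, K.zero_mem, by simpa using h.symm⟩
  | succ m ih =>
    intro v hv h
    rw [pow_succ, Module.End.mul_apply] at h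
    obtain ⟨w, hw, e⟩ := ih (N v) (hK v hv) h
    refine ⟨δ⁻¹ • (v - w), K.smul_mem _ (K.sub_mem hv hw), ?_⟩
    rw [map_smul, map_sub, ← e, smul_smul, mul_inv_cancel₀ hδ, add_sub_cancel_left, smul_smul,
      inv_mul_cancel₀ hδ, one_smul, one_smul, add_sub_cancel]

lemma isUnit_F (V : Type*) [AddCommGroup V] [Module ℂ V] (μ₀ τ : ℂ)
    (hτ : ∀ n : ℤ, τ ≠ (μ₀ + 2 * n + 1) ^ 2)
    (E F H : Module.End ℂ V)
    (hEF : ⁅E, F⁆ = H) (hHE : ⁅H, E⁆ = (2 : ℂ) • E) (hHF : ⁅H, F⁆ = (-2 : ℂ) • F)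
    (hint : DirectSum.IsInternal fun n : ℤ =>
      LinearMap.ker (H - (μ₀ + 2 * n : ℂ) • (1 : Module.End ℂ V)))
    (hnil : ∀ n : ℤ, ∀ x ∈ LinearMap.ker (H - (μ₀ + 2 * n : ℂ) • (1 : Module.End ℂ V)),
      ∃ m : ℕ, ((((H + 1) ^ 2 + (4 : ℂ) • (F * E) - τ • (1 : Module.End ℂ V)) ^ m :
        Module.End ℂ V)) x = 0) : IsUnit F := by
  have hW : ∀ (n : ℤ) (v : V), v ∈ LinearMap.ker (H - (μ₀ + 2 * n : ℂ) • (1 : Module.End ℂ V)) ↔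
      H v = (μ₀ + 2 * n : ℂ) • v := by
    intro n v; simp [LinearMap.mem_ker, sub_eq_zero]
  have aEF : ∀ v, E (F v) = F (E v) + H v := by
    intro v
    have := congrArg (fun f : Module.End ℂ V => f v) hEF
    simp only [Ring.lie_def, LinearMap.sub_apply, Module.End.mul_apply] at this
    rw [← this]; abel
  have aHE : ∀ v, H (E v) = E (H v) + (2 : ℂ) • E v := by
    intro v
    have := congrArg (fun f : Module.End ℂ V => f v) hHE
    simp only [Ring.lie_def, LinearMap.sub_apply, Module.End.mul_apply, LinearMap.smul_apply] at this
    rw [← this]; abel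
  have aHF : ∀ v, H (F v) = F (H v) + (-2 : ℂ) • F v := by
    intro v
    have := congrArg (fun f : Module.End ℂ V => f v) hHF
    simp only [Ring.lie_def, LinearMap.sub_apply, Module.End.mul_apply, LinearMap.smul_apply] at this
    rw [← this]; abel
  obtain ⟨N, hN⟩ : ∃ N, N = (H + 1) ^ 2 + (4 : ℂ) • (F * E) - τ • (1 : Module.End ℂ V) := ⟨_, rfl⟩
  rw [← hN] at hnil
  have aN : ∀ v, N v = H (H v) + (2 : ℂ) • H v + v + (4 : ℂ) • F (E v) - τ • v := by
    intro v
    rw [hN]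
    simp only [pow_two, LinearMap.sub_apply, LinearMap.add_apply, Module.End.mul_apply,
      LinearMap.smul_apply, Module.End.one_apply, map_add]
    module
  rw [Module.End.isUnit_iff]
  constructor
  · have : Function.Injective (E * F) := by
      refine inj_of_internal _ hint _ ?_ ?_
      · intro n v hv
        rw [hW] at hv ⊢
        rw [Module.End.mul_apply, aHE, aHF, map_add, hv, map_smul, map_smul, map_smul]
        module
      · intro n v hv h0
        obtain ⟨m, hm⟩ := hnil n v hv
        rw [hW] at hv
        have hne := hτ (n - 1)
        refine local_inj N (τ - (μ₀ + 2 * ((n - 1 : ℤ) : ℂ) + 1) ^ 2) (sub_ne_zero.mpr hne)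
          v m hm ?_
        rw [Module.End.mul_apply, aEF, hv] at h0
        rw [aN, hv, map_smul, hv]
        push_cast
        linear_combination (norm := module) (4 : ℂ) • h0
    rw [Module.End.mul_eq_comp, LinearMap.coe_comp] at this
    exact this.of_comp
  · have : LinearMap.range F = ⊤ := by
      rw [eq_top_iff, ← hint.submodule_iSup_eq_top, iSup_le_iff]
      intro n v hv
      obtain ⟨m, hm⟩ := hnil n v hv
      have hne := hτ n
      obtain ⟨w, hw, e⟩ := local_surj N (τ - (μ₀ + 2 * (n : ℂ) + 1) ^ 2) (sub_ne_zero.mpr hne)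
        _ (fun u hu => by
          rw [hW] at hu ⊢
          simp only [aN, map_add, map_sub, map_smul, hu, aHF, aHE]
          module) m v hv hm
      rw [hW] at hw
      refine ⟨(4 : ℂ) • E w, ?_⟩
      rw [← e, aN, hw, map_smul, map_smul, hw]
      module
    exact LinearMap.range_eq_top.mp this

/-- on an object of the category `M̄^{ξ,τ}` (with `τ ≠ 0` and
`τ ≠ (μ+1)²` for all `μ ∈ ξ`), any `T` satisfying the four listed relations
gives rise to a compatible Witt_>-module structure with `ρ₂ = T`. -/
theorem weight_module_wittGt_extension_finite_relations
    (V : Type*) [AddCommGroup V] [Module ℂ V] (μ₀ τ : ℂ)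
    (hτ0 : τ ≠ 0)
    (hτ : ∀ n : ℤ, τ ≠ (μ₀ + 2 * n + 1) ^ 2)
    (E F H : Module.End ℂ V)
    (hEF : ⁅E, F⁆ = H) (hHE : ⁅H, E⁆ = (2 : ℂ) • E) (hHF : ⁅H, F⁆ = (-2 : ℂ) • F)
    (hint : DirectSum.IsInternal fun n : ℤ =>
      LinearMap.ker (H - (μ₀ + 2 * n : ℂ) • (1 : Module.End ℂ V)))
    (hfd : ∀ n : ℤ, FiniteDimensional ℂ
      (LinearMap.ker (H - (μ₀ + 2 * n : ℂ) • (1 : Module.End ℂ V)) : Submodule ℂ V))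
    (hnil : ∀ n : ℤ, ∀ x ∈ LinearMap.ker (H - (μ₀ + 2 * n : ℂ) • (1 : Module.End ℂ V)),
      ∃ m : ℕ, ((((H + 1) ^ 2 + (4 : ℂ) • (F * E) - τ • (1 : Module.End ℂ V)) ^ m :
        Module.End ℂ V)) x = 0)
    (T : Module.End ℂ V)
    (hFT : ⁅F, T⁆ = (3 : ℂ) • E)
    (hHT : ⁅H, T⁆ = (4 : ℂ) • T)
    (hcT : ⁅(H + 1) ^ 2 + (4 : ℂ) • (F * E), T⁆ = 0)
    (hTT : ⁅T, ⁅E, T⁆⁆ = (-(1/6) : ℂ) • ⁅E, ⁅E, ⁅E, T⁆⁆⁆) :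
    ∃ ρ : ℤ → Module.End ℂ V, IsWittGtModule E F H ρ ∧ ρ 2 = T := by
  have hu := isUnit_F V μ₀ τ hτ E F H hEF hHE hHF hint hnil
  have h7 := deg7_of_unit E F H T hu hEF hHE hHF hFT hHT hcT hTT
  let _ : LieRing (Module.End ℂ V) := LieRing.ofAssociativeRing
  let _ : LieAlgebra ℂ (Module.End ℂ V) := LieAlgebra.ofAssociativeAlgebra
  exact wseq_ext E F H T hEF hHE hHF hFT hHT hTT h7
end
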